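/- arXiv:1208.6589 — 5 statements merged into one kernel-verified Lean document; each statement's English description precedes it below -/
import Mathlib

section
/- Suppose A ∈ M_{N×N}(ℂ) is invertible and both A and A^{-1} have bandwidth w ≥ 1. Then there exist L ≤ 2w(2w+1) and matrices F_1, …, F_L ∈ M_{N×N}(ℂ), each block diagonal with blocks of size at most 2, such that A = F_1 F_2 ⋯ F_L. -/
/-!
Call a block diagonal matrix with blocks of size at most 2 a layer. The proof has two independent
parts.

*Two block diagonal factors* (`exists_two_block`). Put `n = 2w`, let `D_k` be the projection onto
the coordinates below `2wk`, and let `E_k = A⁻¹ D_k A`. Since `A` and `A⁻¹` have bandwidth `w`,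
the idempotent `E_k` agrees with `D_k` outside the diagonal block with rows and columns in
`J_k = [(2k-1)w, (2k+1)w)`. Comparing traces, the `J_k`-blocks of `E_k` and `D_k` are idempotents
of the same trace, hence of the same rank, hence similar. The windows `J_k` partition the indices,
so the conjugating matrices assemble to an invertible `C`, block diagonal for that partition, with
`C E_k C⁻¹ = D_k` for all `k` at once. Then `B = A C⁻¹` commutes with every `D_k`, that is, `B` is
block diagonal for the partition into the intervals `[2wk, 2w(k+1))`, and `A = B C`.

*An invertible `m × m` matrix is a product of `2(2m-3)` layers and a diagonal matrix*
(`fac_of_isUnit`). Parallel Gaussian elimination between neighbouring rows, in `2m-3` layers,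
brings `M` with its columns reversed to upper triangular form (`exists_upper`). So it remains to
treat a matrix vanishing below the antidiagonal, i.e. a lower triangular matrix with the order of
its rows reversed. Its rows are bubble-sorted back in `2m-3` parallel rounds; whenever two
rows meet, one entry of the lower triangle is cleared (`exists_sort`). What is left is diagonal,
and is absorbed into the last layer.

Running the second part simultaneously in all blocks of `B`, and then of `C` (`fac_of_blocks`),
costs at most `2(2n-3) = 8w - 6 ≤ w(2w+1)` layers for each of the two.
-/

/-- A matrix `F` is block diagonal with blocks of size at most 2: there is a set `S`
of (0-based) positions, containing no two consecutive integers, such that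
`F i j = 0` whenever `i ≠ j` and `{i, j} ≠ {k, k+1}` for every `k ∈ S`. -/
def BlockDiag2 {N : ℕ} (F : Matrix (Fin N) (Fin N) ℂ) : Prop :=
  ∃ S : Set ℕ, (∀ k ∈ S, k + 1 < N) ∧ (∀ k ∈ S, k + 1 ∉ S) ∧
    ∀ i j : Fin N, i ≠ j →
      (∀ k ∈ S, ¬(((i : ℕ) = k ∧ (j : ℕ) = k + 1) ∨ ((i : ℕ) = k + 1 ∧ (j : ℕ) = k))) →
      F i j = 0

open Matrix

/-! ### Products of layers -/

/-- `Fac k M`: the matrix `M` is a product of exactly `k` block diagonal matrices with blocks of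
size at most 2. As the identity is such a matrix, this is monotone in `k`. -/
def Fac {m : ℕ} (k : ℕ) (M : Matrix (Fin m) (Fin m) ℂ) : Prop :=
  ∃ l : List (Matrix (Fin m) (Fin m) ℂ), l.length = k ∧ (∀ F ∈ l, BlockDiag2 F) ∧ l.prod = M

theorem blockDiag2_diagonal {m : ℕ} (d : Fin m → ℂ) : BlockDiag2 (diagonal d) :=
  ⟨∅, by simp, by simp, fun i j hij _ => diagonal_apply_ne d hij⟩

theorem blockDiag2_one {m : ℕ} : BlockDiag2 (1 : Matrix (Fin m) (Fin m) ℂ) := by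
  rw [← diagonal_one]; exact blockDiag2_diagonal _

theorem BlockDiag2.mul_diagonal {m : ℕ} {F : Matrix (Fin m) (Fin m) ℂ} (hF : BlockDiag2 F)
    (d : Fin m → ℂ) : BlockDiag2 (F * diagonal d) := by
  obtain ⟨S, h1, h2, h3⟩ := hF
  refine ⟨S, h1, h2, fun i j hij h => ?_⟩
  rw [Matrix.mul_diagonal, h3 i j hij h, zero_mul]

theorem Fac.one {m : ℕ} (k : ℕ) : Fac k (1 : Matrix (Fin m) (Fin m) ℂ) :=
  ⟨List.replicate k 1, by simp, fun F hF => by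
    rw [List.eq_of_mem_replicate hF]; exact blockDiag2_one, by simp⟩

theorem Fac.mul {m k k' : ℕ} {M M' : Matrix (Fin m) (Fin m) ℂ} (h : Fac k M) (h' : Fac k' M') :
    Fac (k + k') (M * M') := by
  obtain ⟨l, rfl, hl, rfl⟩ := h
  obtain ⟨l', rfl, hl', rfl⟩ := h'
  refine ⟨l ++ l', by simp, fun F hF => ?_, by simp⟩
  rcases List.mem_append.1 hF with h | h
  exacts [hl F h, hl' F h]

theorem Fac.single {m : ℕ} {F : Matrix (Fin m) (Fin m) ℂ} (h : BlockDiag2 F) : Fac 1 F :=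
  ⟨[F], by simp, by simpa using h, by simp⟩

theorem Fac.mono {m k k' : ℕ} {M : Matrix (Fin m) (Fin m) ℂ} (h : Fac k M) (hk : k ≤ k') :
    Fac k' M := by
  obtain ⟨c, rfl⟩ := Nat.exists_eq_add_of_le hk
  simpa using h.mul (Fac.one c)

/-- A diagonal factor is absorbed into the last layer. -/
theorem Fac.mul_diagonal {m k : ℕ} {M : Matrix (Fin m) (Fin m) ℂ} (h : Fac k M) (hk : 1 ≤ k)
    (d : Fin m → ℂ) : Fac k (M * diagonal d) := by
  obtain ⟨l, rfl, hl, rfl⟩ := h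
  rcases List.eq_nil_or_concat l with rfl | ⟨l', F, rfl⟩
  · simp at hk
  · refine ⟨l' ++ [F * diagonal d], by simp, fun G hG => ?_, by simp [mul_assoc]⟩
    simp only [List.mem_append, List.mem_singleton] at hG
    rcases hG with hG | rfl
    · exact hl G (by simp [hG])
    · exact (hl F (by simp)).mul_diagonal d

/-! ### Parallel elimination to triangular form -/

/-- The row operation that, for all `k` in a set `S` without consecutive elements, simultaneously
replaces the rows `(r_k, r_{k+1})` by `(r_{k+1}, r_k - c_k r_{k+1})`. It is given by a matrix `F`
whose inverse `F'` is a layer. -/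
theorem exists_swapLayer {m : ℕ} (S : Set ℕ) (h1 : ∀ k ∈ S, k + 1 < m)
    (h2 : ∀ k ∈ S, k + 1 ∉ S) (c : ℕ → ℂ) :
    ∃ F F' : Matrix (Fin m) (Fin m) ℂ, BlockDiag2 F' ∧ F' * F = 1 ∧
      ∀ (X : Matrix (Fin m) (Fin m) ℂ) (i j : Fin m),
        (∀ i' : Fin m, (i' : ℕ) = i + 1 → (i : ℕ) ∈ S → (F * X) i j = X i' j) ∧
        (∀ i' : Fin m, (i : ℕ) = i' + 1 → (i' : ℕ) ∈ S →
          (F * X) i j = X i' j - c i' * X i j) ∧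
        ((i : ℕ) ∉ S → (∀ k, (i : ℕ) = k + 1 → k ∉ S) → (F * X) i j = X i j) := by
  classical
  -- `τ0` exchanges `k` and `k + 1` for all `k ∈ S`; `F` is a unipotent matrix followed by `τ0`.
  let τ0 : Fin m → Fin m := fun i =>
    if h : (i : ℕ) ∈ S then ⟨i + 1, h1 _ h⟩
    else if 1 ≤ (i : ℕ) ∧ (i : ℕ) - 1 ∈ S then ⟨i - 1, by omega⟩ else i
  have τup : ∀ i i' : Fin m, (i' : ℕ) = i + 1 → (i : ℕ) ∈ S → τ0 i = i' := by
    intro i i' h hS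
    simp only [τ0, dif_pos hS]
    exact Fin.ext h.symm
  have τdn : ∀ i i' : Fin m, (i : ℕ) = i' + 1 → (i' : ℕ) ∈ S → τ0 i = i' := by
    intro i i' h hS
    have : (i : ℕ) ∉ S := by rw [h]; exact h2 _ hS
    simp only [τ0, dif_neg this]
    rw [if_pos ⟨by omega, by rw [h]; simpa using hS⟩]
    apply Fin.ext; simp; omega
  have τid : ∀ i : Fin m, (i : ℕ) ∉ S → (∀ k, (i : ℕ) = k + 1 → k ∉ S) → τ0 i = i := by
    intro i h h'
    simp only [τ0, dif_neg h]
    rw [if_neg]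
    rintro ⟨ha, hb⟩
    exact h' (i - 1) (by omega) hb
  have cases3 : ∀ i : Fin m, (∃ i' : Fin m, (i' : ℕ) = i + 1 ∧ (i : ℕ) ∈ S) ∨
      (∃ i' : Fin m, (i : ℕ) = i' + 1 ∧ (i' : ℕ) ∈ S) ∨
      ((i : ℕ) ∉ S ∧ (∀ k, (i : ℕ) = k + 1 → k ∉ S)) := by
    intro i
    by_cases h : (i : ℕ) ∈ S
    · exact Or.inl ⟨⟨i + 1, h1 _ h⟩, rfl, h⟩
    · by_cases h' : ∃ k, (i : ℕ) = k + 1 ∧ k ∈ S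
      · obtain ⟨k, hk, hkS⟩ := h'
        exact Or.inr (Or.inl ⟨⟨k, by omega⟩, hk, hkS⟩)
      · exact Or.inr (Or.inr ⟨h, fun k hk hkS => h' ⟨k, hk, hkS⟩⟩)
  have hinv : Function.Involutive τ0 := by
    intro i
    rcases cases3 i with ⟨i', h, hS⟩ | ⟨i', h, hS⟩ | ⟨h, h'⟩
    · rw [τup i i' h hS, τdn i' i h hS]
    · rw [τdn i i' h hS, τup i' i h hS]
    · rw [τid i h h', τid i h h']
  let τ : Equiv.Perm (Fin m) := hinv.toPerm
  let Nm : Matrix (Fin m) (Fin m) ℂ := Matrix.of fun a b =>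
    if (a : ℕ) ∈ S ∧ (b : ℕ) = a + 1 then c a else 0
  have hNN : Nm * Nm = 0 := by
    ext a b
    rw [Matrix.mul_apply]
    refine Finset.sum_eq_zero fun x _ => ?_
    by_cases hx : (a : ℕ) ∈ S ∧ (x : ℕ) = a + 1
    · have : (x : ℕ) ∉ S := by rw [hx.2]; exact h2 _ hx.1
      simp [Nm, this]
    · simp [Nm, hx]
  have hNX : ∀ (X : Matrix (Fin m) (Fin m) ℂ) (a j : Fin m),
      (∀ a' : Fin m, (a' : ℕ) = a + 1 → (a : ℕ) ∈ S → (Nm * X) a j = c a * X a' j) ∧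
      ((a : ℕ) ∉ S → (Nm * X) a j = 0) := by
    intro X a j
    refine ⟨fun a' h hS => ?_, fun hS => ?_⟩
    · rw [Matrix.mul_apply, Finset.sum_eq_single a']
      · simp [Nm, h, hS]
      · intro b _ hb
        have : ¬ ((b : ℕ) = a + 1) := fun h' => hb (Fin.ext (h'.trans h.symm))
        simp [Nm, this]
      · simp
    · rw [Matrix.mul_apply]
      refine Finset.sum_eq_zero fun x _ => ?_
      simp [Nm, hS]
  refine ⟨(1 - Nm).submatrix τ id, (1 + Nm).submatrix id τ, ?_, ?_, ?_⟩
  · refine ⟨S, h1, h2, fun i j hij h => ?_⟩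
    have hτ : i ≠ τ j := by
      intro hi
      rcases cases3 j with ⟨j', h', hS⟩ | ⟨j', h', hS⟩ | ⟨h', h''⟩
      · have : i = j' := hi.trans (τup j j' h' hS)
        exact h j hS (Or.inr ⟨by rw [this, h'], rfl⟩)
      · have : i = j' := hi.trans (τdn j j' h' hS)
        exact h j' hS (Or.inl ⟨by rw [this], h'⟩)
      · exact hij (hi.trans (τid j h' h''))
    have hN : Nm i (τ j) = 0 := by
      simp only [Nm, Matrix.of_apply]
      rw [if_neg]
      rintro ⟨hS, hj⟩
      have h3 := τup i (τ j) hj hS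
      exact hij (hinv.injective h3)
    simp [Matrix.one_apply_ne hτ, hN]
  · have : (1 + Nm).submatrix id τ * (1 - Nm).submatrix τ id
        = ((1 + Nm) * (1 - Nm)).submatrix id id := Matrix.submatrix_mul_equiv _ _ _ τ _
    rw [this, Matrix.submatrix_id_id]
    have : (1 + Nm) * (1 - Nm) = 1 - Nm * Nm := by noncomm_ring
    rw [this, hNN, sub_zero]
  · intro X i j
    have hFX : ((1 - Nm).submatrix τ id * X) i j = X (τ i) j - (Nm * X) (τ i) j := by
      have : ((1 - Nm).submatrix τ id * X) i j = ((1 - Nm) * X) (τ i) j := by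
        simp [Matrix.mul_apply]
      rw [this, Matrix.sub_mul, Matrix.one_mul, Matrix.sub_apply]
    rw [hFX]
    refine ⟨fun i' h hS => ?_, fun i' h hS => ?_, fun h h' => ?_⟩
    · have : τ i = i' := τup i i' h hS
      rw [this, (hNX X i' j).2 (by rw [h]; exact h2 _ hS), sub_zero]
    · have : τ i = i' := τdn i i' h hS
      rw [this, (hNX X i' j).1 i h hS]
    · have : τ i = i := τid i h h'
      rw [this, (hNX X i j).2 h, sub_zero]

/-- One round of the elimination. The entry `(i, j)` below the diagonal is cleared at time
`m - i + 2j`, using the rows `i - 1` and `i`. The rows treated at a given time all have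
the same parity, and to the left of the entry being cleared both rows already vanish. -/
theorem elim_step {m t : ℕ} (X : Matrix (Fin m) (Fin m) ℂ)
    (hX : ∀ i j : Fin m, j < i → m + 2 * (j : ℕ) ≤ t + i → X i j = 0) :
    ∃ F F' : Matrix (Fin m) (Fin m) ℂ, BlockDiag2 F' ∧ F' * F = 1 ∧
      ∀ i j : Fin m, j < i → m + 2 * (j : ℕ) ≤ t + 1 + i → (F * X) i j = 0 := by
  classical
  let S : Set ℕ := {k | ∃ (i j : Fin m), (i : ℕ) = k + 1 ∧ j < i ∧ m + 2 * (j : ℕ) = t + 1 + i ∧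
    X i j ≠ 0}
  -- Time and row determine the column `j`, so the multiplier is a function of the row alone.
  have hc : ∃ c : ℕ → ℂ, ∀ i' i j : Fin m, (i : ℕ) = i' + 1 → m + 2 * (j : ℕ) = t + 1 + i →
      X i j ≠ 0 → X i' j - c i' * X i j = 0 := by
    refine ⟨fun k => if h : k + 1 < m ∧ (t + 1 + (k + 1) - m) / 2 < m then
      X ⟨k, by omega⟩ ⟨(t + 1 + (k + 1) - m) / 2, h.2⟩ /
        X ⟨k + 1, h.1⟩ ⟨(t + 1 + (k + 1) - m) / 2, h.2⟩ else 0, fun i' i j h h' hne => ?_⟩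
    have hj : (t + 1 + ((i' : ℕ) + 1) - m) / 2 = j := by omega
    have e1 : (⟨(i' : ℕ) + 1, by omega⟩ : Fin m) = i := Fin.ext h.symm
    simp only [hj, Fin.is_lt, and_true, Fin.eta]
    rw [dif_pos (by omega), e1, div_mul_cancel₀ _ hne, sub_self]
  obtain ⟨c, hc⟩ := hc
  obtain ⟨F, F', hF', hFF, hF⟩ := exists_swapLayer (m := m) S
    (by rintro k ⟨i, j, h, -⟩; omega)
    (by rintro k ⟨i, j, h, -, h', -⟩ ⟨i2, j2, h2, -, h2', -⟩; omega) c
  refine ⟨F, F', hF', hFF, fun i j hji hle => ?_⟩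
  obtain ⟨hu, hd, hi⟩ := hF X i j
  have hji' : (j : ℕ) < i := hji
  by_cases hS : (i : ℕ) ∈ S
  · obtain ⟨i', j', h, -⟩ := id hS
    rw [hu i' h hS]
    exact hX _ _ (Fin.lt_def.2 (by omega)) (by omega)
  by_cases hS' : ∃ k, (i : ℕ) = k + 1 ∧ k ∈ S
  · obtain ⟨k, hk, hkS⟩ := hS'
    rw [hd ⟨k, by omega⟩ hk hkS]
    obtain ⟨i2, j2, e2, hlt, ht, hne⟩ := hkS
    have hlt' : (j2 : ℕ) < i2 := hlt
    by_cases hj : j = j2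
    · have : i2 = i := Fin.ext (by omega)
      subst hj this
      exact hc ⟨k, by omega⟩ i2 j e2 ht hne
    · have hj' : (j : ℕ) ≠ j2 := fun h => hj (Fin.ext h)
      rw [hX i j hji (by omega), hX ⟨k, by omega⟩ j (Fin.lt_def.2 (by simp; omega))
        (by simp; omega)]
      simp
  · rw [hi hS (fun k hk hkS => hS' ⟨k, hk, hkS⟩)]
    by_cases h : m + 2 * (j : ℕ) ≤ t + i
    · exact hX i j hji h
    · by_contra hne
      exact hS' ⟨i - 1, by omega, i, j, by omega, hji, by omega, hne⟩

/-- For `t = 2m - 3` the matrix `X` is upper triangular. -/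
theorem exists_upper {m : ℕ} (M : Matrix (Fin m) (Fin m) ℂ) (t : ℕ) :
    ∃ G X : Matrix (Fin m) (Fin m) ℂ, Fac t G ∧ M = G * X ∧
      ∀ i j : Fin m, j < i → m + 2 * (j : ℕ) ≤ t + i → X i j = 0 := by
  induction t with
  | zero =>
    refine ⟨1, M, Fac.one 0, by simp, fun i j h h' => ?_⟩
    have := i.2
    omega
  | succ t ih =>
    obtain ⟨G, X, hG, hM, hX⟩ := ih
    obtain ⟨F, F', hF', hFF, hF⟩ := elim_step X hX
    refine ⟨G * F', F * X, hG.mul (Fac.single hF'), ?_, hF⟩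
    rw [hM, mul_assoc, ← mul_assoc F', hFF, one_mul]

/-! ### Sorting a lower triangular matrix with reversed rows -/

/-- The position of row `a` after `t` rounds of the parallel bubble sort that starts with the `m`
rows in reversed order and exchanges the rows `a ≠ b` in round `a + b`. Row `a` rests at `m - 1 - a`
until round `a`, then moves down to the bottom position `m - 1` while the rows `b < a` pass it, then
moves up past the rows `b > a` to its final position `a`. -/
def rho (m t a : ℕ) : ℕ :=
  if t + 1 ≤ a then m - 1 - a else if t + 1 ≤ 2 * a then m + t - 2 * a else
    max (m - 1 + 2 * a - t) a

theorem rho_lt {m t a : ℕ} (ha : a < m) : rho m t a < m := by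
  unfold rho; split_ifs <;> omega

theorem rho_inj {m t a b : ℕ} (ha : a < m) (hb : b < m) (h : rho m t a = rho m t b) : a = b := by
  unfold rho at h; split_ifs at h <;> omega

/-- `rho m t` as a permutation of the indices. -/
noncomputable def rhoPerm (m t : ℕ) : Equiv.Perm (Fin m) :=
  Equiv.ofBijective (fun a => ⟨rho m t a, rho_lt a.2⟩)
    (Finite.injective_iff_bijective.1 fun a b h => Fin.ext (rho_inj a.2 b.2 (Fin.ext_iff.1 h)))

theorem rhoPerm_val (m t : ℕ) (a : Fin m) : (rhoPerm m t a : ℕ) = rho m t a := rfl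

/-- The rows `b < a` with `a + b = t + 1` are neighbours after round `t` and are exchanged in the
next round. -/
theorem rho_swap {m t a b : ℕ} (ha : a < m) (hba : b < a) (h : a + b = t + 1) :
    rho m (t + 1) a = m + b - a ∧ rho m t b = m + b - a ∧
    rho m (t + 1) b = m - 1 + b - a ∧ rho m t a = m - 1 + b - a := by
  unfold rho; split_ifs <;> omega

theorem rho_fix {m t a : ℕ} (ha : a < m)
    (h : ∀ b, b < m → a + b = t + 1 → b = a) : rho m (t + 1) a = rho m t a := by
  by_cases h1 : t + 1 < a
  · unfold rho; split_ifs <;> omega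
  by_cases h2 : t + 1 - a < m
  · have := h (t + 1 - a) h2 (by omega)
    unfold rho; split_ifs <;> omega
  · unfold rho; split_ifs <;> omega

/-- One round of the sort. In the coordinates of the sorted matrix, round `t + 1` clears the entries
`(a, b)` with `b < a` and `a + b = t + 1` by subtracting a multiple of row `b` from row `a`; by then
row `b` has only its diagonal entry left. The rows `a` and `b` are neighbours at that moment, so this
operation combined with their exchange is a layer. -/
theorem sort_step {m t : ℕ} (X : Matrix (Fin m) (Fin m) ℂ)
    (hlow : ∀ a b : Fin m, a < b → X a b = 0) (hdiag : ∀ a, X a a ≠ 0)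
    (hX : ∀ a b : Fin m, b < a → (a : ℕ) + b ≤ t → X a b = 0) :
    ∃ F Y : Matrix (Fin m) (Fin m) ℂ, BlockDiag2 F ∧
      X.submatrix (rhoPerm m t).symm id = F * Y.submatrix (rhoPerm m (t + 1)).symm id ∧
      (∀ a b : Fin m, a < b → Y a b = 0) ∧ (∀ a, Y a a ≠ 0) ∧
      (∀ a b : Fin m, b < a → (a : ℕ) + b ≤ t + 1 → Y a b = 0) := by
  classical
  let Nm : Matrix (Fin m) (Fin m) ℂ := Matrix.of fun a b =>
    if b < a ∧ (a : ℕ) + b = t + 1 then X a b / X b b else 0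
  have hNN : Nm * Nm = 0 := by
    ext a b
    rw [Matrix.mul_apply]
    refine Finset.sum_eq_zero fun x _ => ?_
    simp only [Nm, Matrix.of_apply, Fin.lt_def]
    split_ifs <;> first | omega | simp
  have hY : ∀ a b : Fin m, ((1 - Nm) * X) a b = X a b - (Nm * X) a b := by
    intro a b
    rw [Matrix.sub_mul, Matrix.one_mul, Matrix.sub_apply]
  have hN1 : ∀ a b c : Fin m, c < a → (a : ℕ) + c = t + 1 →
      (Nm * X) a b = X a c / X c c * X c b := by
    intro a b c hc hac
    rw [Matrix.mul_apply, Finset.sum_eq_single c]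
    · simp [Nm, hc, hac]
    · intro x _ hx
      have : ¬ ((a : ℕ) + x = t + 1) := fun h => hx (Fin.ext (by omega))
      simp [Nm, this]
    · simp
  have hN0 : ∀ a b : Fin m, (¬ ∃ c : Fin m, c < a ∧ (a : ℕ) + c = t + 1) → (Nm * X) a b = 0 := by
    intro a b h
    rw [Matrix.mul_apply]
    refine Finset.sum_eq_zero fun x _ => ?_
    have : ¬ (x < a ∧ (a : ℕ) + x = t + 1) := fun hx => h ⟨x, hx⟩
    simp [Nm, this]
  refine ⟨(1 + Nm).submatrix (rhoPerm m t).symm (rhoPerm m (t + 1)).symm, (1 - Nm) * X,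
    ?_, ?_, ?_, ?_, ?_⟩
  · refine ⟨{k | ∃ a b : Fin m, b < a ∧ (a : ℕ) + b = t + 1 ∧ k = m - 1 + b - a}, ?_, ?_, ?_⟩
    · rintro k ⟨a, b, hba, -, rfl⟩
      rw [Fin.lt_def] at hba
      omega
    · rintro k ⟨a, b, hba, hab, rfl⟩ ⟨a', b', hba', hab', h⟩
      rw [Fin.lt_def] at hba hba'
      omega
    · intro i j hij h
      obtain ⟨a, rfl⟩ := (rhoPerm m t).surjective i
      obtain ⟨b, rfl⟩ := (rhoPerm m (t + 1)).surjective j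
      simp only [Matrix.submatrix_apply, Equiv.symm_apply_apply, Matrix.add_apply]
      have hij' : rho m t a ≠ rho m (t + 1) b := fun h => hij (Fin.ext h)
      simp only [rhoPerm_val] at h
      have hne : a ≠ b := by
        rintro rfl
        by_cases hp : ∀ b, b < m → (a : ℕ) + b = t + 1 → b = a
        · exact hij' (rho_fix a.2 hp).symm
        · push Not at hp
          obtain ⟨b, hb, hab, hne⟩ := hp
          rcases lt_or_gt_of_ne hne with hlt | hlt
          · obtain ⟨e1, -, -, e2⟩ := rho_swap a.2 hlt hab
            refine h _ ⟨a, ⟨b, hb⟩, hlt, hab, rfl⟩ (Or.inl ⟨e2, ?_⟩)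
            rw [e1]; simp; omega
          · obtain ⟨-, e1, e2, -⟩ := rho_swap (t := t) hb hlt (by omega)
            refine h _ ⟨⟨b, hb⟩, a, hlt, by simp; omega, rfl⟩ (Or.inr ⟨?_, e2⟩)
            rw [e1]; simp; omega
      have hN : Nm a b = 0 := by
        simp only [Nm, Matrix.of_apply]
        rw [if_neg]
        rintro ⟨hba, hab⟩
        obtain ⟨-, -, e2, e1⟩ := rho_swap a.2 hba hab
        exact hij' (e1.trans e2.symm)
      rw [Matrix.one_apply_ne hne, hN, add_zero]
  · rw [Matrix.submatrix_mul_equiv, ← mul_assoc]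
    have : (1 + Nm) * (1 - Nm) = 1 - Nm * Nm := by noncomm_ring
    rw [this, hNN, sub_zero, one_mul]
  · intro a b hab
    rw [hY, hlow a b hab, zero_sub, neg_eq_zero]
    by_cases hc : ∃ c : Fin m, c < a ∧ (a : ℕ) + c = t + 1
    · obtain ⟨c, hca, hc⟩ := hc
      rw [hN1 a b c hca hc, hlow c b (hca.trans hab), mul_zero]
    · exact hN0 a b hc
  · intro a
    rw [hY]
    by_cases hc : ∃ c : Fin m, c < a ∧ (a : ℕ) + c = t + 1
    · obtain ⟨c, hca, hc⟩ := hc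
      rw [hN1 a a c hca hc, hlow c a hca, mul_zero, sub_zero]
      exact hdiag a
    · rw [hN0 a a hc, sub_zero]
      exact hdiag a
  · intro a b hba hab
    rw [hY]
    by_cases he : (a : ℕ) + b = t + 1
    · rw [hN1 a b b hba he, div_mul_cancel₀ _ (hdiag b), sub_self]
    · rw [hX a b hba (by omega), zero_sub, neg_eq_zero]
      by_cases hc : ∃ c : Fin m, c < a ∧ (a : ℕ) + c = t + 1
      · obtain ⟨c, hca, hc⟩ := hc
        rw [Fin.lt_def] at hca
        rw [hN1 a b c hca hc, hX c b (Fin.lt_def.2 (by omega)) (by omega), mul_zero]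
      · exact hN0 a b hc

theorem exists_sort {m : ℕ} (X : Matrix (Fin m) (Fin m) ℂ)
    (hlow : ∀ a b : Fin m, a < b → X a b = 0) (hdiag : ∀ a, X a a ≠ 0) (t : ℕ) :
    ∃ G Y : Matrix (Fin m) (Fin m) ℂ, Fac t G ∧
      X.submatrix (rhoPerm m 0).symm id = G * Y.submatrix (rhoPerm m t).symm id ∧
      (∀ a b : Fin m, a < b → Y a b = 0) ∧ (∀ a, Y a a ≠ 0) ∧
      (∀ a b : Fin m, b < a → (a : ℕ) + b ≤ t → Y a b = 0) := by
  induction t with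
  | zero =>
    refine ⟨1, X, Fac.one 0, by simp, hlow, hdiag, fun a b h h' => ?_⟩
    rw [Fin.lt_def] at h
    omega
  | succ t ih =>
    obtain ⟨G, Y, hG, hM, h1, h2, h3⟩ := ih
    obtain ⟨F, Z, hF, hFZ, h1', h2', h3'⟩ := sort_step Y h1 h2 h3
    refine ⟨G * F, Z, hG.mul (Fac.single hF), ?_, h1', h2', h3'⟩
    rw [hM, hFZ, mul_assoc]

theorem rho_zero {m a : ℕ} (ha : a < m) : rho m 0 a = m - 1 - a := by
  unfold rho; split_ifs <;> omega

theorem rho_last {m a : ℕ} (ha : a < m) : rho m (2 * m - 3) a = a := by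
  unfold rho; split_ifs <;> omega

/-- The bound `1 ≤ K` only matters for `m ≤ 1`, where the diagonal factor needs a layer. -/
theorem fac_of_isUnit {m K : ℕ} (M : Matrix (Fin m) (Fin m) ℂ) (hM : IsUnit M)
    (hK : 2 * (2 * m - 3) ≤ K) (hK1 : 1 ≤ K) : Fac K M := by
  obtain ⟨G, R, hG, hMR, hR⟩ := exists_upper (M.submatrix id Fin.rev) (2 * m - 3)
  have hR' : ∀ i j : Fin m, j < i → R i j = 0 := fun i j h =>
    hR i j h (by rw [Fin.lt_def] at h; omega)
  have hM' : M = G * R.submatrix id Fin.rev := by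
    have := congrArg (fun Z => Z.submatrix id Fin.rev) hMR
    simp only [Matrix.submatrix_submatrix] at this
    have e : (Fin.rev ∘ Fin.rev : Fin m → Fin m) = id := by ext; simp
    rw [e, Function.comp_id, Matrix.submatrix_id_id] at this
    rw [this]
    ext i j
    simp [Matrix.mul_apply]
  have hdet : IsUnit R.det := by
    have h1 := (Matrix.isUnit_iff_isUnit_det _).1 hM
    rw [hM', Matrix.det_mul] at h1
    have h2 := isUnit_of_mul_isUnit_right h1
    have h3 : (R.submatrix id (Fin.revPerm (n := m))).det
        = _ := Matrix.det_permute' Fin.revPerm R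
    have h4 : (R.submatrix id (Fin.rev : Fin m → Fin m)).det
        = (R.submatrix id (Fin.revPerm (n := m))).det := rfl
    rw [h4, h3] at h2
    exact isUnit_of_mul_isUnit_right h2
  have hRd : ∀ i, R i i ≠ 0 := by
    have : R.BlockTriangular id := fun i j h => hR' i j h
    rw [Matrix.det_of_isUpperTriangular this, isUnit_iff_ne_zero, Finset.prod_ne_zero_iff] at hdet
    exact fun i => hdet i (Finset.mem_univ i)
  obtain ⟨G2, Y, hG2, hGY, h1, h2, h3⟩ := exists_sort (R.submatrix Fin.rev Fin.rev)
    (fun a b h => hR' _ _ (Fin.rev_lt_rev.2 h)) (fun a => hRd _) (2 * m - 3)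
  have e0 : ∀ i, (rhoPerm m 0).symm i = Fin.rev i := by
    intro i
    rw [Equiv.symm_apply_eq]
    apply Fin.ext
    rw [rhoPerm_val, rho_zero (Fin.rev i).2]
    simp [Fin.val_rev]; omega
  have e1 : ∀ i, (rhoPerm m (2 * m - 3)).symm i = i := by
    intro i
    rw [Equiv.symm_apply_eq]
    apply Fin.ext
    rw [rhoPerm_val, rho_last i.2]
  have e2 : R.submatrix id Fin.rev = G2 * diagonal (fun a => Y a a) := by
    have hYd : Y.submatrix (rhoPerm m (2 * m - 3)).symm id = diagonal (fun a => Y a a) := by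
      ext a b
      rw [Matrix.submatrix_apply, e1, id]
      rcases lt_trichotomy a b with h | rfl | h
      · rw [h1 a b h, diagonal_apply_ne _ h.ne]
      · rw [diagonal_apply_eq]
      · rw [h3 a b h (by rw [Fin.lt_def] at h; omega), diagonal_apply_ne _ h.ne']
    rw [← hYd, ← hGY]
    ext i j
    simp [e0]
  rw [hM', e2, ← mul_assoc]
  exact ((hG.mul hG2).mono (by omega)).mul_diagonal hK1 _

/-! ### Partition into intervals and assembly of blocks -/

/-- The length of the `b`-th interval `[n b - o, n (b + 1) - o) ∩ [0, N)` in the partition of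
`[0, N)` into intervals of length `n` shifted to the left by the offset `o ≤ n`. Truncated
subtraction takes care of the left end. -/
def blockLen (N n o b : ℕ) : ℕ := min N (n * (b + 1) - o) - (n * b - o)

theorem blockIdx {N n o b x : ℕ} (ho : o ≤ n) (hx : x < blockLen N n o b) :
    n * b - o + x < N ∧ (n * b - o + x + o) / n = b := by
  unfold blockLen at hx
  have h1 : n * (b + 1) = n * b + n := by ring
  rw [h1] at hx
  refine ⟨by omega, ?_⟩
  rcases Nat.eq_zero_or_pos b with rfl | hb
  · rw [Nat.mul_zero] at *
    exact Nat.div_eq_of_lt (by omega)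
  · have h2 : n ≤ n * b := Nat.le_mul_of_pos_right n hb
    exact Nat.div_eq_of_lt_le (by rw [mul_comm]; omega) (by rw [mul_comm (b + 1) n, h1]; omega)

/-- An index is the same as a block number `b` and a position in the block. The index `i` lies in
block number `(i + o) / n`; there are at most `N + o` blocks, some of them possibly empty. -/
noncomputable def blockEquiv (N n o : ℕ) (ho : o ≤ n) (hn : 0 < n) :
    (Σ b : Fin (N + o), Fin (blockLen N n o b)) ≃ Fin N :=
  Equiv.ofBijective (fun p => ⟨n * p.1 - o + p.2, (blockIdx ho p.2.2).1⟩) (by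
    constructor
    · rintro ⟨⟨b, hb⟩, ⟨x, hx⟩⟩ ⟨⟨b', hb'⟩, ⟨x', hx'⟩⟩ h
      have h' : n * b - o + x = n * b' - o + x' := Fin.ext_iff.1 h
      have hbb : b = b' := by
        have e1 : (n * b - o + x + o) / n = b := (blockIdx ho hx).2
        have e2 : (n * b' - o + x' + o) / n = b' := (blockIdx ho hx').2
        rw [← e1, ← e2, h']
      subst hbb
      have : x = x' := by omega
      subst this
      rfl
    · intro i
      have hi := i.2
      have h1 : n * ((i + o) / n) ≤ i + o := Nat.mul_div_le _ _
      have h2 : i + o < n * ((i + o) / n) + n := by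
        have := Nat.lt_mul_div_succ (i + o) hn
        rwa [Nat.mul_add, Nat.mul_one] at this
      refine ⟨⟨⟨(i + o) / n, lt_of_le_of_lt (Nat.div_le_self _ _) (by omega)⟩,
        ⟨i - (n * ((i + o) / n) - o), ?_⟩⟩, Fin.ext ?_⟩
      · simp only [blockLen, Nat.mul_add, Nat.mul_one]
        omega
      · simp only
        omega)

section

variable {N n o : ℕ} (ho : o ≤ n) (hn : 0 < n)

theorem blockEquiv_val (p : Σ b : Fin (N + o), Fin (blockLen N n o b)) :
    (blockEquiv N n o ho hn p : ℕ) = n * p.1 - o + p.2 := rfl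

theorem blockEquiv_div (p : Σ b : Fin (N + o), Fin (blockLen N n o b)) :
    ((blockEquiv N n o ho hn p : ℕ) + o) / n = p.1 := (blockIdx ho p.2.2).2

/-- The block diagonal `N × N` matrix with the given diagonal blocks, as a ring homomorphism. -/
noncomputable def asm :
    (∀ b : Fin (N + o), Matrix (Fin (blockLen N n o b)) (Fin (blockLen N n o b)) ℂ) →+*
      Matrix (Fin N) (Fin N) ℂ :=
  ((Matrix.reindexAlgEquiv ℂ ℂ (blockEquiv N n o ho hn)).toRingEquiv.toRingHom).comp
    (Matrix.blockDiagonal'RingHom _ ℂ)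

theorem asm_apply (f) (p q : Σ b : Fin (N + o), Fin (blockLen N n o b)) :
    asm ho hn f (blockEquiv N n o ho hn p) (blockEquiv N n o ho hn q) =
      Matrix.blockDiagonal' f p q := by
  simp [asm]

theorem asm_injective : Function.Injective (asm (N := N) ho hn) :=
  (Matrix.reindexAlgEquiv ℂ ℂ (blockEquiv N n o ho hn)).injective.comp
    Matrix.blockDiagonal'_injective

theorem trace_asm (f) : (asm (N := N) ho hn f).trace = ∑ b, (f b).trace := by
  rw [← Matrix.trace_blockDiagonal', Matrix.trace, Matrix.trace,
    ← (blockEquiv N n o ho hn).sum_comp]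
  simp only [Matrix.diag, asm_apply]

/-- The diagonal blocks of a matrix; the entries off these blocks are forgotten. -/
noncomputable def blocks (M : Matrix (Fin N) (Fin N) ℂ) (b : Fin (N + o)) :
    Matrix (Fin (blockLen N n o b)) (Fin (blockLen N n o b)) ℂ :=
  M.submatrix (fun x => blockEquiv N n o ho hn ⟨b, x⟩) (fun x => blockEquiv N n o ho hn ⟨b, x⟩)

theorem asm_blocks (M : Matrix (Fin N) (Fin N) ℂ)
    (hM : ∀ i j : Fin N, ((i : ℕ) + o) / n ≠ ((j : ℕ) + o) / n → M i j = 0) :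
    asm ho hn (blocks ho hn M) = M := by
  ext i j
  obtain ⟨⟨b, x⟩, rfl⟩ := (blockEquiv N n o ho hn).surjective i
  obtain ⟨⟨b', y⟩, rfl⟩ := (blockEquiv N n o ho hn).surjective j
  rw [asm_apply]
  by_cases h : b = b'
  · subst h
    rw [Matrix.blockDiagonal'_apply_eq]
    rfl
  · rw [Matrix.blockDiagonal'_apply_ne _ _ _ h, hM]
    rw [blockEquiv_div, blockEquiv_div]
    exact fun h' => h (Fin.ext h')

theorem blockDiag2_asm (f : ∀ b : Fin (N + o), Matrix (Fin (blockLen N n o b)) _ ℂ)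
    (hf : ∀ b, BlockDiag2 (f b)) : BlockDiag2 (asm ho hn f) := by
  choose S h1 h2 h3 using hf
  refine ⟨{k | ∃ b, ∃ x ∈ S b, k = n * (b : ℕ) - o + x}, ?_, ?_, ?_⟩
  · rintro k ⟨b, x, hx, rfl⟩
    have := (blockIdx ho (h1 b x hx)).1
    omega
  · rintro k ⟨b, x, hx, rfl⟩ ⟨b', x', hx', h⟩
    have e1 := (blockIdx ho (h1 b x hx)).2
    have e2 := (blockIdx ho (lt_trans (Nat.lt_succ_self _) (h1 b' x' hx'))).2
    rw [← add_assoc, h, e2] at e1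
    have : b' = b := Fin.ext e1
    subst this
    have : x' = x + 1 := by omega
    subst this
    exact h2 _ x hx hx'
  · intro i j hij h
    obtain ⟨⟨b, x⟩, rfl⟩ := (blockEquiv N n o ho hn).surjective i
    obtain ⟨⟨b', y⟩, rfl⟩ := (blockEquiv N n o ho hn).surjective j
    rw [asm_apply]
    by_cases hb : b = b'
    · subst hb
      rw [Matrix.blockDiagonal'_apply_eq]
      refine h3 b x y (fun hxy => hij (by rw [hxy])) fun k hk hk' => ?_
      refine h _ ⟨b, k, hk, rfl⟩ ?_
      rw [blockEquiv_val, blockEquiv_val]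
      simp only
      omega
    · exact Matrix.blockDiagonal'_apply_ne _ _ _ hb

theorem isUnit_blocks (f : ∀ b : Fin (N + o), Matrix (Fin (blockLen N n o b)) _ ℂ)
    (hf : IsUnit (asm ho hn f)) (b : Fin (N + o)) : IsUnit (f b) := by
  obtain ⟨Y, hY⟩ := hf.exists_right_inv
  refine IsUnit.of_mul_eq_one (blocks ho hn Y b) ?_
  ext x y
  have h := congrFun (congrFun hY (blockEquiv N n o ho hn ⟨b, x⟩)) (blockEquiv N n o ho hn ⟨b, y⟩)
  rw [Matrix.mul_apply, ← (blockEquiv N n o ho hn).sum_comp, Fintype.sum_sigma,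
    Finset.sum_eq_single b] at h
  · simp only [asm_apply, Matrix.blockDiagonal'_apply_eq] at h
    rw [Matrix.mul_apply]
    refine h.trans ?_
    simp [Matrix.one_apply]
  · intro b' _ hb'
    refine Finset.sum_eq_zero fun z _ => ?_
    rw [asm_apply, Matrix.blockDiagonal'_apply_ne _ _ _ hb'.symm, zero_mul]
  · simp

theorem blockLen_le (b : ℕ) : blockLen N n o b ≤ n := by
  unfold blockLen
  rw [Nat.mul_add, Nat.mul_one]
  omega

end

/-- The factorizations of the blocks, padded to the same length, run in parallel. -/
theorem fac_of_blocks {N n o K : ℕ} (ho : o ≤ n) (hn : 0 < n) (hK : 2 * (2 * n - 3) ≤ K) (hK1 : 1 ≤ K)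
    (M : Matrix (Fin N) (Fin N) ℂ) (hMu : IsUnit M)
    (hM : ∀ i j : Fin N, ((i : ℕ) + o) / n ≠ ((j : ℕ) + o) / n → M i j = 0) : Fac K M := by
  rw [← asm_blocks ho hn M hM] at hMu ⊢
  have h : ∀ b, Fac K (blocks ho hn M b) := fun b =>
    fac_of_isUnit _ (isUnit_blocks ho hn _ hMu b)
      (by have := blockLen_le (N := N) (n := n) (o := o) b; omega) hK1
  choose l hl hl2 hl3 using h
  refine ⟨List.ofFn fun t : Fin K => asm ho hn fun b => (l b).get (t.cast (hl b).symm),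
    by simp, ?_, ?_⟩
  · intro F hF
    obtain ⟨t, rfl⟩ := (List.mem_ofFn' _ _).1 hF
    exact blockDiag2_asm ho hn _ fun b => hl2 b _ (List.get_mem _ _)
  · have e : (List.ofFn fun t : Fin K => asm ho hn fun b => (l b).get (t.cast (hl b).symm))
        = (List.ofFn fun (t : Fin K) b => (l b).get (t.cast (hl b).symm)).map (asm ho hn) := by
      rw [List.map_ofFn]; rfl
    rw [e, ← map_list_prod]
    congr 1
    funext b
    rw [Pi.list_prod_apply, List.map_ofFn, ← hl3 b]
    congr 1
    refine List.ext_get (by simp [hl b]) fun i h h' => ?_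
    simp

/-! ### Splitting a banded matrix into two block diagonal factors -/

/-- Idempotents of equal trace are similar, since the trace is the rank. -/
theorem exists_similar {m : ℕ} (e d : Matrix (Fin m) (Fin m) ℂ) (he : e * e = e) (hd : d * d = d)
    (h : e.trace = d.trace) : ∃ c : Matrix (Fin m) (Fin m) ℂ, IsUnit c ∧ c * e = d * c := by
  have key : ∀ e : Matrix (Fin m) (Fin m) ℂ, e * e = e → 
      LinearMap.IsProj (LinearMap.range e.toLin') e.toLin' := by
    intro e he
    apply LinearMap.IsIdempotentElem.isProj_range
    change e.toLin' * e.toLin' = e.toLin'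
    rw [Module.End.mul_eq_comp, ← Matrix.toLin'_mul, he]
  have pe := key e he
  have pd := key d hd
  have hr : Module.finrank ℂ (LinearMap.range e.toLin') =
      Module.finrank ℂ (LinearMap.range d.toLin') := by
    have h1 := pe.trace
    have h2 := pd.trace
    rw [Matrix.trace_toLin'_eq] at h1 h2
    exact_mod_cast (h1.symm.trans (h.trans h2))
  have hk : Module.finrank ℂ (LinearMap.ker e.toLin') =
      Module.finrank ℂ (LinearMap.ker d.toLin') := by
    have h1 := LinearMap.finrank_range_add_finrank_ker e.toLin'
    have h2 := LinearMap.finrank_range_add_finrank_ker d.toLin'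
    omega
  let φ := LinearEquiv.ofFinrankEq _ _ hr
  let ψ := LinearEquiv.ofFinrankEq _ _ hk
  let ue := Submodule.prodEquivOfIsCompl _ _ pe.isCompl
  let ud := Submodule.prodEquivOfIsCompl _ _ pd.isCompl
  let C : (Fin m → ℂ) ≃ₗ[ℂ] (Fin m → ℂ) := ue.symm ≪≫ₗ (φ.prodCongr ψ) ≪≫ₗ ud
  refine ⟨LinearMap.toMatrix' C.toLinearMap, ?_, ?_⟩
  · refine IsUnit.of_mul_eq_one (LinearMap.toMatrix' C.symm.toLinearMap) ?_
    rw [← LinearMap.toMatrix'_comp]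
    simp
  · apply Matrix.toLin'.injective
    rw [Matrix.toLin'_mul, Matrix.toLin'_mul, Matrix.toLin'_toMatrix']
    apply LinearMap.ext
    intro v
    obtain ⟨⟨x, y⟩, rfl⟩ := ue.surjective v
    have h1 : e.toLin' (ue (x, y)) = ue (x, 0) := by
      simp only [ue, Submodule.coe_prodEquivOfIsCompl', map_add]
      rw [pe.map_id _ x.2, LinearMap.mem_ker.1 y.2]
      simp
    have hC : ∀ x y, C (ue (x, y)) = ud (φ x, ψ y) := by
      intro x y
      simp [C]
    have h2 : d.toLin' (ud (φ x, ψ y)) = ud (φ x, 0) := by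
      simp only [ud, Submodule.coe_prodEquivOfIsCompl', map_add]
      rw [pd.map_id _ (φ x).2, LinearMap.mem_ker.1 (ψ y).2]
      simp
    simp only [LinearMap.comp_apply, LinearEquiv.coe_coe]
    rw [h1, hC, hC, h2, map_zero]

/-- The projection onto the coordinates with index less than `p`. -/
noncomputable def cutProj (N p : ℕ) : Matrix (Fin N) (Fin N) ℂ :=
  diagonal fun i => if (i : ℕ) < p then 1 else 0

theorem cutProj_mul_self (N p : ℕ) : cutProj N p * cutProj N p = cutProj N p := by
  rw [cutProj, diagonal_mul_diagonal]
  congr 1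
  funext i
  simp

theorem cutProj_mul_apply {N p : ℕ} (X : Matrix (Fin N) (Fin N) ℂ) (i j : Fin N) :
    (cutProj N p * X) i j = if (i : ℕ) < p then X i j else 0 := by
  rw [cutProj, diagonal_mul]
  split_ifs <;> simp

theorem mul_cutProj_apply {N p : ℕ} (X : Matrix (Fin N) (Fin N) ℂ) (i j : Fin N) :
    (X * cutProj N p) i j = if (j : ℕ) < p then X i j else 0 := by
  rw [cutProj, mul_diagonal]
  split_ifs <;> simp

theorem cutProj_apply_left {N p : ℕ} (i j : Fin N) :
    cutProj N p i j = if (i : ℕ) < p then (1 : Matrix (Fin N) (Fin N) ℂ) i j else 0 := by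
  rw [← cutProj_mul_apply, mul_one]

theorem cutProj_apply_right {N p : ℕ} (i j : Fin N) :
    cutProj N p i j = if (j : ℕ) < p then (1 : Matrix (Fin N) (Fin N) ℂ) i j else 0 := by
  rw [← mul_cutProj_apply, one_mul]

/-- Conjugation by `A` changes the projection only in rows and columns within the window
`[p - w, p + w)`. -/
theorem conj_cutProj_apply {N w p : ℕ} (A : Matrix (Fin N) (Fin N) ℂ) (hA : A⁻¹ * A = 1)
    (hband : ∀ i j : Fin N, ((j : ℕ) + w < (i : ℕ) ∨ (i : ℕ) + w < (j : ℕ)) → A i j = 0)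
    (hbandInv : ∀ i j : Fin N, ((j : ℕ) + w < (i : ℕ) ∨ (i : ℕ) + w < (j : ℕ)) → A⁻¹ i j = 0)
    (i j : Fin N) (h : ((i : ℕ) + w < p ∨ p + w ≤ i) ∨ ((j : ℕ) + w < p ∨ p + w ≤ j)) :
    (A⁻¹ * cutProj N p * A) i j = cutProj N p i j := by
  rcases h with h | h
  · rw [Matrix.mul_apply, cutProj_apply_left, ← hA, Matrix.mul_apply]
    rcases h with h | h
    · rw [if_pos (by omega)]
      refine Finset.sum_congr rfl fun a _ => ?_
      rw [mul_cutProj_apply]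
      split_ifs with ha
      · rfl
      · rw [hbandInv i a (by omega)]
    · have hN := i.2
      have h0 : ∀ a : Fin N, (A⁻¹ * cutProj N p) i a = 0 := by
        intro a
        rw [mul_cutProj_apply]
        split_ifs with ha
        · exact hbandInv i a (by omega)
        · rfl
      rw [if_neg (by omega)]
      exact Finset.sum_eq_zero fun a _ => by rw [h0, zero_mul]
  · rw [mul_assoc, Matrix.mul_apply, cutProj_apply_right, ← hA, Matrix.mul_apply]
    rcases h with h | h
    · rw [if_pos (by omega)]
      refine Finset.sum_congr rfl fun a _ => ?_
      rw [cutProj_mul_apply]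
      split_ifs with ha
      · rfl
      · rw [hband a j (by omega)]
    · have h0 : ∀ a : Fin N, (cutProj N p * A) a j = 0 := by
        intro a
        rw [cutProj_mul_apply]
        split_ifs with ha
        · exact hband a j (by omega)
        · rfl
      rw [if_neg (by omega)]
      exact Finset.sum_eq_zero fun a _ => by rw [h0, mul_zero]

/-- An invertible `A` with `A` and `A⁻¹` of bandwidth `w` is a product of two block diagonal
matrices with blocks of size at most `2w`; the two partitions are shifted by `w` against each
other. -/
theorem exists_two_block {N w : ℕ} (hw : 1 ≤ w)
    (A : Matrix (Fin N) (Fin N) ℂ) (hA : IsUnit A)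
    (hband : ∀ i j : Fin N, ((j : ℕ) + w < (i : ℕ) ∨ (i : ℕ) + w < (j : ℕ)) → A i j = 0)
    (hbandInv : ∀ i j : Fin N, ((j : ℕ) + w < (i : ℕ) ∨ (i : ℕ) + w < (j : ℕ)) → A⁻¹ i j = 0) :
    ∃ B C : Matrix (Fin N) (Fin N) ℂ, IsUnit B ∧ IsUnit C ∧ A = B * C ∧
      (∀ i j : Fin N, ((i : ℕ) + 0) / (2 * w) ≠ ((j : ℕ) + 0) / (2 * w) → B i j = 0) ∧
      (∀ i j : Fin N, ((i : ℕ) + w) / (2 * w) ≠ ((j : ℕ) + w) / (2 * w) → C i j = 0) := by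
  have hn : 0 < 2 * w := by omega
  have ho : w ≤ 2 * w := by omega
  have hdet := (Matrix.isUnit_iff_isUnit_det A).1 hA
  have hA1 : A⁻¹ * A = 1 := Matrix.nonsing_inv_mul A hdet
  have hA2 : A * A⁻¹ = 1 := Matrix.mul_nonsing_inv A hdet
  let D : ℕ → Matrix (Fin N) (Fin N) ℂ := fun k => cutProj N (2 * w * k)
  let E : ℕ → Matrix (Fin N) (Fin N) ℂ := fun k => A⁻¹ * D k * A
  -- Position relative to the cut `2wk` is read off from the block number.
  have hlt : ∀ a k : ℕ, (a + w) / (2 * w) < k → a + w < 2 * w * k := fun a k h => by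
    rw [mul_comm]; exact (Nat.div_lt_iff_lt_mul hn).1 h
  have hgt : ∀ a k : ℕ, k < (a + w) / (2 * w) → 2 * w * k + w ≤ a := fun a k h => by
    have h1 : (k + 1) * (2 * w) ≤ a + w := (Nat.le_div_iff_mul_le hn).1 h
    have h2 : (k + 1) * (2 * w) = 2 * w * k + 2 * w := by ring
    omega
  have hne : ∀ a k : ℕ, (a + w) / (2 * w) ≠ k → (a + w < 2 * w * k ∨ 2 * w * k + w ≤ a) :=
    fun a k h => (lt_or_gt_of_ne h).imp (hlt a k) (hgt a k)
  have hED : ∀ (k : ℕ) (i j : Fin N),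
      ((i : ℕ) + w) / (2 * w) ≠ k ∨ ((j : ℕ) + w) / (2 * w) ≠ k → E k i j = D k i j :=
    fun k i j h => conj_cutProj_apply A hA1 hband hbandInv i j (h.imp (hne i k) (hne j k))
  have hDdiag : ∀ (k : ℕ) (i j : Fin N),
      ((i : ℕ) + w) / (2 * w) ≠ ((j : ℕ) + w) / (2 * w) → D k i j = 0 := by
    intro k i j h
    exact diagonal_apply_ne _ fun hij => h (by rw [hij])
  have hEdiag : ∀ (k : ℕ) (i j : Fin N),
      ((i : ℕ) + w) / (2 * w) ≠ ((j : ℕ) + w) / (2 * w) → E k i j = 0 := by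
    intro k i j h
    rw [hED k i j (by by_contra! h'; exact h (h'.1.trans h'.2.symm)), hDdiag k i j h]
  have hDasm : ∀ k, asm ho hn (blocks ho hn (D k)) = D k := fun k => asm_blocks ho hn _ (hDdiag k)
  have hEasm : ∀ k, asm ho hn (blocks ho hn (E k)) = E k := fun k => asm_blocks ho hn _ (hEdiag k)
  have hEE : ∀ k, E k * E k = E k := by
    intro k
    calc A⁻¹ * D k * A * (A⁻¹ * D k * A) = A⁻¹ * (D k * (A * A⁻¹) * D k) * A := by
          simp only [mul_assoc]
      _ = A⁻¹ * D k * A := by rw [hA2, mul_one, cutProj_mul_self]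
  have hidem : ∀ X : Matrix (Fin N) (Fin N) ℂ, X * X = X → asm ho hn (blocks ho hn X) = X →
      ∀ b, blocks ho hn X b * blocks ho hn X b = blocks ho hn X b := by
    intro X hXX hX b
    have : blocks ho hn X * blocks ho hn X = blocks ho hn X := by
      apply asm_injective ho hn
      rw [map_mul, hX, hXX]
    exact congrFun this b
  have hother : ∀ (k : ℕ) (b : Fin (N + w)), (b : ℕ) ≠ k →
      blocks ho hn (E k) b = blocks ho hn (D k) b := by
    intro k b hb
    ext x y
    exact hED k _ _ (Or.inl (by rw [blockEquiv_div]; exact hb))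
  have htr : ∀ b : Fin (N + w),
      (blocks ho hn (E b) b).trace = (blocks ho hn (D b) b).trace := by
    intro b
    have h1 : (E b).trace = (D b).trace := by
      rw [Matrix.trace_mul_cycle, hA2, one_mul]
    rw [← hEasm, ← hDasm, trace_asm, trace_asm, ← sub_eq_zero, ← Finset.sum_sub_distrib,
      Finset.sum_eq_single b] at h1
    · exact sub_eq_zero.1 h1
    · intro b' _ hb'
      rw [hother b b' (fun h => hb' (Fin.ext h)), sub_self]
    · simp
  have hex := fun b : Fin (N + w) => exists_similar _ _ (hidem _ (hEE b) (hEasm b) b)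
    (hidem _ (cutProj_mul_self _ _) (hDasm b) b) (htr b)
  choose c hcu hc using hex
  -- Away from block `k`, the projection onto the coordinates below `2wk` is a scalar `0` or `1`.
  have hscal : ∀ (k : ℕ) (b : Fin (N + w)), (b : ℕ) ≠ k →
      blocks ho hn (D k) b = 1 ∨ blocks ho hn (D k) b = 0 := by
    intro k b hb
    rcases lt_or_gt_of_ne hb with h | h
    · left
      ext x y
      have h1 := hlt (blockEquiv N (2 * w) w ho hn ⟨b, x⟩) k (by rw [blockEquiv_div]; exact h)
      change cutProj N (2 * w * k) _ _ = _
      rw [cutProj_apply_left, if_pos (by omega : (blockEquiv N (2 * w) w ho hn ⟨b, x⟩ : ℕ) < _)]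
      simp [Matrix.one_apply]
    · right
      ext x y
      have h1 := hgt (blockEquiv N (2 * w) w ho hn ⟨b, x⟩) k (by rw [blockEquiv_div]; exact h)
      change cutProj N (2 * w * k) _ _ = _
      rw [cutProj_apply_left, if_neg (by omega : ¬ (blockEquiv N (2 * w) w ho hn ⟨b, x⟩ : ℕ) < _)]
      rfl
  have hCu : IsUnit (asm ho hn c) := (Pi.isUnit_iff.2 hcu).map (asm ho hn)
  have hCE : ∀ k : Fin (N + w), asm ho hn c * E k = D k * asm ho hn c := by
    intro k
    rw [← hEasm, ← hDasm, ← map_mul, ← map_mul]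
    congr 1
    funext b
    change c b * blocks ho hn (E k) b = blocks ho hn (D k) b * c b
    by_cases hb : b = k
    · subst hb; exact hc b
    · have hb' : (b : ℕ) ≠ k := fun h => hb (Fin.ext h)
      rw [hother k b hb']
      rcases hscal k b hb' with h | h <;> simp [h]
  obtain ⟨C, hC⟩ : ∃ C, C = asm ho hn c := ⟨_, rfl⟩
  rw [← hC] at hCu hCE
  have hCdet := (Matrix.isUnit_iff_isUnit_det C).1 hCu
  have hC1 : C⁻¹ * C = 1 := Matrix.nonsing_inv_mul C hCdet
  have hC2 : C * C⁻¹ = 1 := Matrix.mul_nonsing_inv C hCdet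
  have hBD : ∀ k : Fin (N + w), D k * (A * C⁻¹) = A * C⁻¹ * D k := by
    intro k
    calc D k * (A * C⁻¹) = A * A⁻¹ * D k * A * C⁻¹ := by rw [hA2, one_mul, mul_assoc]
      _ = A * (C⁻¹ * C) * E k * C⁻¹ := by rw [hC1]; simp only [E, mul_assoc, mul_one]
      _ = A * C⁻¹ * (C * E k) * C⁻¹ := by simp only [mul_assoc]
      _ = A * C⁻¹ * D k * (C * C⁻¹) := by rw [hCE k]; simp only [mul_assoc]
      _ = A * C⁻¹ * D k := by rw [hC2, mul_one]
  refine ⟨A * C⁻¹, C, hA.mul (IsUnit.of_mul_eq_one C hC1), hCu, ?_, ?_, ?_⟩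
  · rw [mul_assoc, hC1, mul_one]
  · intro i j hij
    rw [add_zero, add_zero] at hij
    rcases lt_or_gt_of_ne hij with h | h
    · have hk : (j : ℕ) / (2 * w) < N + w := lt_of_le_of_lt (Nat.div_le_self _ _) (by omega)
      have h1 := congrFun (congrFun (hBD ⟨_, hk⟩) i) j
      have h2 : 2 * w * ((j : ℕ) / (2 * w)) ≤ j := Nat.mul_div_le _ _
      have h3 : (i : ℕ) < 2 * w * ((j : ℕ) / (2 * w)) := by
        rw [mul_comm]; exact (Nat.div_lt_iff_lt_mul hn).1 h
      rwa [cutProj_mul_apply, mul_cutProj_apply, if_pos h3, if_neg (by simpa using h2)] at h1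
    · have hk : (i : ℕ) / (2 * w) < N + w := lt_of_le_of_lt (Nat.div_le_self _ _) (by omega)
      have h1 := congrFun (congrFun (hBD ⟨_, hk⟩) i) j
      have h2 : 2 * w * ((i : ℕ) / (2 * w)) ≤ i := Nat.mul_div_le _ _
      have h3 : (j : ℕ) < 2 * w * ((i : ℕ) / (2 * w)) := by
        rw [mul_comm]; exact (Nat.div_lt_iff_lt_mul hn).1 h
      rw [cutProj_mul_apply, mul_cutProj_apply, if_pos h3, if_neg (by simpa using h2)] at h1
      exact h1.symm
  · intro i j hij
    rw [hC]
    obtain ⟨⟨b, x⟩, rfl⟩ := (blockEquiv N (2 * w) w ho hn).surjective i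
    obtain ⟨⟨b', y⟩, rfl⟩ := (blockEquiv N (2 * w) w ho hn).surjective j
    rw [blockEquiv_div, blockEquiv_div] at hij
    rw [asm_apply]
    exact Matrix.blockDiagonal'_apply_ne _ _ _ fun h => hij (congrArg Fin.val h)

/-! ### The factorization -/

/-- If `A` is invertible and both `A` and `A⁻¹` have bandwidth `w ≥ 1`, then `A` is a
product of `L ≤ 2w(2w+1)` block diagonal matrices with blocks of size at most 2. -/
theorem blockFactorization_of_banded (N w : ℕ) (hw : 1 ≤ w)
    (A : Matrix (Fin N) (Fin N) ℂ) (hA : IsUnit A)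
    (hband : ∀ i j : Fin N, ((j : ℕ) + w < (i : ℕ) ∨ (i : ℕ) + w < (j : ℕ)) → A i j = 0)
    (hbandInv : ∀ i j : Fin N, ((j : ℕ) + w < (i : ℕ) ∨ (i : ℕ) + w < (j : ℕ)) → A⁻¹ i j = 0) :
    ∃ L, L ≤ 2 * w * (2 * w + 1) ∧
      ∃ F : Fin L → Matrix (Fin N) (Fin N) ℂ,
        (∀ i, BlockDiag2 (F i)) ∧ A = (List.ofFn F).prod := by
  obtain ⟨B, C, hB, hC, hAB, hB', hC'⟩ := exists_two_block hw A hA hband hbandInv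
  -- `w (2w + 1) - (8w - 6) = (2w - 3)(w - 2)`, which is nonnegative at every integer `w`.
  have hK : 2 * (2 * (2 * w) - 3) ≤ w * (2 * w + 1) := by
    rcases hw.eq_or_lt with rfl | h
    · norm_num
    · obtain ⟨v, rfl⟩ : ∃ v, w = 2 + v := Nat.exists_eq_add_of_le h
      have : (2 + v) * (2 * (2 + v) + 1) = 10 + 9 * v + 2 * (v * v) := by ring
      omega
  have hK1 : 1 ≤ w * (2 * w + 1) := Nat.mul_pos hw (by omega)
  have fB := fac_of_blocks (Nat.zero_le _) (by omega) hK hK1 B hB hB'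
  have fC := fac_of_blocks (show w ≤ 2 * w by omega) (by omega) hK hK1 C hC hC'
  obtain ⟨l, hl, hl2, hl3⟩ := fB.mul fC
  refine ⟨l.length, le_of_eq (by rw [hl]; ring), l.get, fun i => hl2 _ (List.get_mem _ _), ?_⟩
  rw [List.ofFn_get, hl3, hAB]
end

section
/- Let N ≥ 1, d ≥ 0, and let c : ({0,1,…,d})^N → ℂ be an arbitrary coefficient tensor. Then there exist natural numbers D_0 = D_N = 1 and D_1, …, D_{N−1} with D_k ≤ (d+1)^{min(k, N−k)} (in particular D_k ≤ (d+1)^{⌊N/2⌋}), together with matrices B^{[k]}_{n} ∈ M_{D_{k−1}×D_k}(ℂ) for each site k ∈ {1,…,N} and each index n ∈ {0,1,…,d}, such that for all (n_1,…,n_N), c(n_1,…,n_N) = B^{[1]}_{n_1} B^{[2]}_{n_2} ⋯ B^{[N]}_{n_N} (the right-hand side being a 1×1 matrix identified with its unique entry). That is, every state in (ℂ^{d+1})^{⊗N} admits a matrix product state representation with bond dimensions at most (d+1)^{⌊N/2⌋}. -/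
/-!
Put `q = d + 1`. The bond dimensions are exactly `q ^ min k (N - k)`, and every site matrix is
explicit. Cut the chain at the middle site `h = (N - 1) / 2`. A bond `k ≤ h` carries the
base-`q` code `n₀ + n₁ q + ⋯ + n_{k-1} q^{k-1}` of the indices to its left, and a bond `k > h`
carries the base-`q` code of the indices to its right. Sites left of `h` append a digit to the
code (a 0/1 matrix), sites right of `h` remove one (a 0/1 matrix), and the site `h` holds the
coefficients `c`, read as a function of the code of the whole configuration.

Writing `P m` for the code of the first `m` indices, the partial products are computed by
induction: the entry in column `j` is `1` if `j = P m` and `0` otherwise as long as `m ≤ h`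
(`mpsProd_left`), and it is `C (P m + q ^ m * j)` once `m > h` (`mpsProd_right`). For `m = N` the
only column is `j = 0`, and `C (P N) = c n`.
-/

/-- Left-to-right contraction of a chain of matrices: `mpsProd D M m` is the
product `M 0 * M 1 * ⋯ * M (m-1)` (a `D 0 × D m` matrix). -/
noncomputable def mpsProd (D : ℕ → ℕ)
    (M : ∀ k : ℕ, Matrix (Fin (D k)) (Fin (D (k + 1))) ℂ) :
    ∀ m : ℕ, Matrix (Fin (D 0)) (Fin (D m)) ℂ
  | 0 => 1
  | m + 1 => mpsProd D M m * M m

/-- Little-endian base-`q` code of the first `m` terms of `x`. -/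
def leftCode (q : ℕ) (x : ℕ → ℕ) (m : ℕ) : ℕ := ∑ i ∈ Finset.range m, x i * q ^ i

/-- The bond dimension `q ^ min k (N - k)`. -/
def bondDim (q N k : ℕ) : ℕ := q ^ min k (N - k)

/-- The entry in row `a`, column `b` of the matrix at site `k` for the physical index `x`;
`h` is the middle site and `C` gives the coefficient as a function of the full code. -/
noncomputable def siteEntry (q h : ℕ) (C : ℕ → ℂ) (k x a b : ℕ) : ℂ :=
  if k < h then (if b = a + x * q ^ k then 1 else 0)
  else if k = h then C (a + x * q ^ k + q ^ (k + 1) * b)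
  else (if a = x + q * b then 1 else 0)

lemma leftCode_succ (q : ℕ) (x : ℕ → ℕ) (m : ℕ) :
    leftCode q x (m + 1) = leftCode q x m + x m * q ^ m :=
  Finset.sum_range_succ _ _

lemma leftCode_lt {q : ℕ} {x : ℕ → ℕ} (hx : ∀ i, x i < q) (m : ℕ) :
    leftCode q x m < q ^ m := by
  induction m with
  | zero => simp [leftCode]
  | succ m ih =>
    rw [leftCode_succ, pow_succ]
    have h1 : (x m + 1) * q ^ m ≤ q * q ^ m := Nat.mul_le_mul_right _ (hx m)
    nlinarith

/-- Summing over `Fin D` against the indicator of an index `t < D` evaluates at `t`. -/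
lemma sum_fin_indicator {D t : ℕ} (ht : t < D) (f : ℕ → ℂ) :
    ∑ a : Fin D, (if (a : ℕ) = t then 1 else 0) * f a = f t := by
  rw [Finset.sum_eq_single (⟨t, ht⟩ : Fin D)]
  · simp
  · intro b _ hb
    rw [if_neg (fun h => hb (Fin.ext h)), zero_mul]
  · simp

section Contraction

variable {q N h : ℕ} {C : ℕ → ℂ} {x : ℕ → ℕ}
  {M : ∀ k : ℕ, Matrix (Fin (bondDim q N k)) (Fin (bondDim q N (k + 1))) ℂ}

/-- Left of the middle site the partial product is the indicator of the code of the indices read so far. -/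
lemma mpsProd_left (hx : ∀ i, x i < q) (hh : 2 * h ≤ N) (hhN : h < N)
    (hM : ∀ k < N, ∀ a b, M k a b = siteEntry q h C k (x k) a b) (m : ℕ) (hm : m ≤ h)
    (i : Fin (bondDim q N 0)) (j : Fin (bondDim q N m)) :
    mpsProd (bondDim q N) M m i j = if (j : ℕ) = leftCode q x m then 1 else 0 := by
  induction m with
  | zero =>
    have hi := i.2
    have hj := j.2
    simp only [bondDim, Nat.zero_min, pow_zero, Nat.lt_one_iff] at hi hj
    have hij : i = j := Fin.ext (hi.trans hj.symm)
    subst hij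
    rw [mpsProd, Matrix.one_apply_eq, if_pos (by simp [leftCode, hj])]
  | succ m ih =>
    have hlt : leftCode q x m < bondDim q N m := by
      rw [bondDim, min_eq_left (by omega)]
      exact leftCode_lt hx m
    rw [mpsProd, Matrix.mul_apply]
    simp only [ih (by omega), hM m (by omega)]
    rw [sum_fin_indicator hlt (fun a => siteEntry q h C m (x m) a j), siteEntry,
      if_pos (by omega), leftCode_succ]

/-- Right of the middle site the column index supplies the code of the missing digits. -/
lemma mpsProd_right (hx : ∀ i, x i < q) (hh : 2 * h ≤ N) (hN : N ≤ 2 * h + 2) (hhN : h < N)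
    (hM : ∀ k < N, ∀ a b, M k a b = siteEntry q h C k (x k) a b) (m : ℕ) (hm : h + 1 ≤ m)
    (hmN : m ≤ N) (i : Fin (bondDim q N 0)) (j : Fin (bondDim q N m)) :
    mpsProd (bondDim q N) M m i j = C (leftCode q x m + q ^ m * j) := by
  induction m, hm using Nat.le_induction with
  | base =>
    have hlt : leftCode q x h < bondDim q N h := by
      rw [bondDim, min_eq_left (by omega)]
      exact leftCode_lt hx h
    rw [mpsProd, Matrix.mul_apply]
    simp only [mpsProd_left hx hh hhN hM h le_rfl, hM h hhN]
    rw [sum_fin_indicator hlt (fun a => siteEntry q h C h (x h) a j), siteEntry,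
      if_neg (lt_irrefl h), if_pos rfl, leftCode_succ]
  | succ m hm ih =>
    -- prepending the digit `x m` to a code of `N - (m + 1)` digits gives one of `N - m` digits
    have hlt : x m + q * j < bondDim q N m := by
      have hj : (j : ℕ) < q ^ (N - (m + 1)) :=
        j.2.trans_eq (by rw [bondDim, min_eq_right (by omega)])
      have hD : bondDim q N m = q ^ (N - m) := by rw [bondDim, min_eq_right (by omega)]
      rw [hD, show N - m = N - (m + 1) + 1 by omega, pow_succ']
      have h1 : q * ((j : ℕ) + 1) ≤ q * q ^ (N - (m + 1)) := Nat.mul_le_mul_left _ hj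
      have h2 := hx m
      nlinarith
    rw [mpsProd, Matrix.mul_apply]
    simp only [ih (by omega), hM m (by omega), siteEntry, if_neg (show ¬ m < h by omega),
      if_neg (show ¬ m = h by omega)]
    simp only [mul_comm (C _)]
    rw [sum_fin_indicator hlt (fun a => C (leftCode q x m + q ^ m * a)), leftCode_succ]
    congr 1
    ring

end Contraction

/-- Every coefficient tensor `c : {0,…,d}^N → ℂ` admits a matrix product state
representation with bond dimensions `D k ≤ (d+1)^{min(k, N−k)}`
(in particular `≤ (d+1)^{⌊N/2⌋}`). -/
theorem exists_mps_representation (N d : ℕ) (hN : 1 ≤ N)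
    (c : (Fin N → Fin (d + 1)) → ℂ) :
    ∃ D : ℕ → ℕ, D 0 = 1 ∧ D N = 1 ∧
      (∀ k ≤ N, D k ≤ (d + 1) ^ min k (N - k)) ∧
      ∃ B : ∀ k : Fin N, Fin (d + 1) → Matrix (Fin (D (k : ℕ))) (Fin (D ((k : ℕ) + 1))) ℂ,
        ∀ n : Fin N → Fin (d + 1), ∀ i : Fin (D 0), ∀ j : Fin (D N),
          mpsProd D (fun m => if h : m < N then B ⟨m, h⟩ (n ⟨m, h⟩) else 0) N i j = c n := by
  let q := d + 1
  let h := (N - 1) / 2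
  let C : ℕ → ℂ := fun t =>
    if ht : t < (d + 1) ^ N then c (finFunctionFinEquiv.symm ⟨t, ht⟩) else 0
  refine ⟨bondDim q N, by simp [bondDim], by simp [bondDim], fun k _ => le_rfl,
    fun k x => Matrix.of fun a b => siteEntry q h C k x a b, fun n i j => ?_⟩
  -- the indices of the configuration, extended by `0` beyond the chain
  let x : ℕ → ℕ := fun k => if hk : k < N then (n ⟨k, hk⟩ : ℕ) else 0
  have hx : ∀ k, x k < q := by
    intro k
    by_cases hk : k < N
    · simp only [x, dif_pos hk]
      exact (n ⟨k, hk⟩).2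
    · simp [x, hk, q]
  rw [mpsProd_right (C := C) (h := h) hx (by omega) (by omega) (by omega) ?_ N (by omega) le_rfl]
  · have hj : (j : ℕ) = 0 := by
      have hj := j.2
      simpa [bondDim] using hj
    have hcode : leftCode q x N = (finFunctionFinEquiv n : Fin ((d + 1) ^ N)) := by
      rw [finFunctionFinEquiv_apply, leftCode, Finset.sum_range]
      simp [x, q]
    rw [hj, mul_zero, add_zero, hcode]
    simp only [C, dif_pos (finFunctionFinEquiv n).2, Fin.eta, Equiv.symm_apply_apply]
  · intro k hk a b
    simp only [dif_pos hk, x, Matrix.of_apply]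
end

section
/- Let F_1, …, F_i ∈ M_{N×N}(ℂ) each be block diagonal with blocks of size at most 2, and let p = (Φ_{F_i} ∘ ⋯ ∘ Φ_{F_2} ∘ Φ_{F_1})(X_1 X_2 ⋯ X_N). Then every monomial X_1^{n_1} ⋯ X_N^{n_N} in the support of p satisfies n_k ≤ 2^i for every k ∈ {1,…,N}. -/
/-!
Each column `k` of a block diagonal matrix with blocks of size at most 2 has at most two nonzero
entries, so `X_k` occurs in at most two of the linear forms `Φ_F(X_i)`, with degree at most 1 in
each. A monomial whose exponents are all at most `d` is sent by `Φ_F` to a product of at most `d`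
copies of each of these forms, so its image has degree at most `2 d` in `X_k`. Thus each layer at
most doubles the maximal exponent (`degreeOf_Phi_le`), which equals 1 for `X_1 ⋯ X_N`.
-/

open MvPolynomial

/-- The algebra endomorphism `Φ_A` of `ℂ[X_1,…,X_N]` determined by
`Φ_A(X_i) = Σ_j A_{ij} X_j`. -/
noncomputable def Phi {N : ℕ} (A : Matrix (Fin N) (Fin N) ℂ) :
    MvPolynomial (Fin N) ℂ →ₐ[ℂ] MvPolynomial (Fin N) ℂ :=
  aeval fun i => ∑ j, C (A i j) * X j

lemma BlockDiag2.card_column_le {N : ℕ} {F : Matrix (Fin N) (Fin N) ℂ} (hF : BlockDiag2 F)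
    (k : Fin N) : (Finset.univ.filter fun i => F i k ≠ 0).card ≤ 2 := by
  obtain ⟨S, -, hS, h0⟩ := hF
  classical
  -- The only possible off-diagonal row is `k + 1` if a block starts at `k`, and `k - 1` otherwise.
  let b : ℕ := if (k : ℕ) ∈ S then k + 1 else k - 1
  have hsub : (Finset.univ.filter fun i => F i k ≠ 0).image (fun i : Fin N => (i : ℕ)) ⊆
      {(k : ℕ), b} := by
    intro n hn
    simp only [Finset.mem_image, Finset.mem_filter, Finset.mem_univ, true_and] at hn
    obtain ⟨i, hi, rfl⟩ := hn
    simp only [Finset.mem_insert, Finset.mem_singleton]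
    by_contra! hne
    refine hi (h0 i k (fun h => hne.1 (congrArg _ h)) fun l hl h => ?_)
    rcases h with ⟨h1, h2⟩ | ⟨h1, h2⟩
    · have hk : (k : ℕ) ∉ S := h2 ▸ hS l hl
      have := hne.2
      simp only [b, if_neg hk] at this
      omega
    · have hk : (k : ℕ) ∈ S := h2 ▸ hl
      have := hne.2
      simp only [b, if_pos hk] at this
      omega
  rw [← Finset.card_image_of_injective _ Fin.val_injective]
  exact (Finset.card_le_card hsub).trans Finset.card_le_two

lemma degreeOf_linearForm_le {N : ℕ} (a : Fin N → ℂ) (k : Fin N) :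
    degreeOf k (∑ j, C (a j) * X j) ≤ if a k ≠ 0 then 1 else 0 := by
  refine (degreeOf_sum_le _ _ _).trans (Finset.sup_le fun j _ => ?_)
  by_cases hj : a j = 0
  · simp [hj]
  · refine (degreeOf_C_mul_le _ _ _).trans ?_
    rw [degreeOf_X]
    by_cases hkj : k = j
    · subst hkj
      simp [hj]
    · simp [hkj]

lemma degreeOf_Phi_le {N : ℕ} {F : Matrix (Fin N) (Fin N) ℂ} (hF : BlockDiag2 F)
    {q : MvPolynomial (Fin N) ℂ} {d : ℕ} (hq : ∀ m ∈ q.support, ∀ j, m j ≤ d) (k : Fin N) :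
    degreeOf k (Phi F q) ≤ 2 * d := by
  rw [Phi, aeval_def, eval₂_eq']
  refine (degreeOf_sum_le _ _ _).trans (Finset.sup_le fun m hm => ?_)
  refine (degreeOf_C_mul_le _ _ _).trans ((degreeOf_prod_le _ _ _).trans ?_)
  calc ∑ i, degreeOf k ((∑ j, C (F i j) * X j) ^ m i)
      ≤ ∑ i, if F i k ≠ 0 then d else 0 := by
        refine Finset.sum_le_sum fun i _ => (degreeOf_pow_le _ _ _).trans ?_
        refine (Nat.mul_le_mul (hq m hm i) (degreeOf_linearForm_le (F i) k)).trans ?_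
        split_ifs <;> simp
    _ = (Finset.univ.filter fun i => F i k ≠ 0).card * d := by
        rw [← Finset.sum_filter, Finset.sum_const, smul_eq_mul]
    _ ≤ 2 * d := Nat.mul_le_mul_right d (hF.card_column_le k)

lemma foldl_Phi_exponent_le {N : ℕ} (L : List (Matrix (Fin N) (Fin N) ℂ))
    (hL : ∀ G ∈ L, BlockDiag2 G) (q : MvPolynomial (Fin N) ℂ) (d : ℕ)
    (hq : ∀ m ∈ q.support, ∀ k, m k ≤ d) :
    ∀ m ∈ (L.foldl (fun q G => Phi G q) q).support, ∀ k, m k ≤ 2 ^ L.length * d := by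
  induction L generalizing q d with
  | nil => simpa using hq
  | cons G L ih =>
    intro m hm k
    have h := ih (fun G' h' => hL G' (List.mem_cons_of_mem _ h')) (Phi G q) (2 * d)
      (fun m hm j => (monomial_le_degreeOf j hm).trans
        (degreeOf_Phi_le (hL G List.mem_cons_self) hq j)) m hm k
    rw [List.length_cons, pow_succ, mul_assoc]
    exact h

/-- After applying `i` layers `Φ_{F_i} ∘ ⋯ ∘ Φ_{F_1}` of gates coming from block
diagonal matrices with blocks of size at most 2 to `X_1 X_2 ⋯ X_N`, every variable
appears in every monomial with exponent at most `2^i`. -/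
theorem local_degree_bound (N i : ℕ) (F : Fin i → Matrix (Fin N) (Fin N) ℂ)
    (hF : ∀ l, BlockDiag2 (F l))
    (p : MvPolynomial (Fin N) ℂ)
    (hp : p = (List.ofFn F).foldl (fun q G => Phi G q) (∏ j, X j)) :
    ∀ m ∈ p.support, ∀ k, m k ≤ 2 ^ i := by
  subst hp
  intro m hm k
  have h := foldl_Phi_exponent_le (List.ofFn F)
    (fun G hG => by obtain ⟨l, rfl⟩ := List.mem_ofFn.mp hG; exact hF l) (∏ j, X j) 1
    (fun m hm k => (monomial_le_degreeOf k hm).trans <| (degreeOf_prod_le _ _ _).trans <| by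
      simp [degreeOf_X]) m hm k
  simpa using h
end

section
/- Let F_1, F_2, …, F_L ∈ M_{N×N}(ℂ) be arbitrary matrices and let A = F_1 F_2 ⋯ F_L. Then per(A) equals the coefficient of the monomial X_1 X_2 ⋯ X_N in the polynomial (Φ_{F_L} ∘ ⋯ ∘ Φ_{F_2} ∘ Φ_{F_1})(X_1 X_2 ⋯ X_N). -/
/-!
`A ↦ Φ_A` reverses products, `Φ_B ∘ Φ_A = Φ_{AB}` (`Phi_Phi`), since both sides are algebra maps
agreeing on the variables. Hence the composite `Φ_{F_L} ∘ ⋯ ∘ Φ_{F_1}` is `Φ_A` (`foldl_Phi`), and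
it remains to read off the coefficient of `X_1 ⋯ X_N` in `∏ i, ∑ j, A i j X_j`, which is the
permanent because only bijective choices `i ↦ j` yield that monomial (`coeff_Phi_prod_X`).
-/

open MvPolynomial

/-- The permanent `per(A) = Σ_{π ∈ S_N} ∏_i A_{i,π(i)}`. -/
noncomputable def per {N : ℕ} (A : Matrix (Fin N) (Fin N) ℂ) : ℂ :=
  ∑ σ : Equiv.Perm (Fin N), ∏ i, A i (σ i)

theorem Phi_Phi {N : ℕ} (A B : Matrix (Fin N) (Fin N) ℂ) (q : MvPolynomial (Fin N) ℂ) :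
    Phi B (Phi A q) = Phi (A * B) q := by
  refine DFunLike.congr_fun (?_ : (Phi B).comp (Phi A) = Phi (A * B)) q
  ext1 i
  simp only [Phi, AlgHom.comp_apply, aeval_X, map_sum, map_mul, algHom_C, algebraMap_eq,
    Matrix.mul_apply, Finset.mul_sum, Finset.sum_mul]
  rw [Finset.sum_comm]
  simp only [mul_assoc]

theorem Phi_one {N : ℕ} (q : MvPolynomial (Fin N) ℂ) : Phi 1 q = q := by
  simp [Phi, Matrix.one_apply, apply_ite C, ite_mul]

theorem foldl_Phi {N : ℕ} (l : List (Matrix (Fin N) (Fin N) ℂ)) (q : MvPolynomial (Fin N) ℂ) :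
    l.foldl (fun q G => Phi G q) q = Phi l.prod q := by
  induction l generalizing q with
  | nil => simp [Phi_one]
  | cons G l ih => rw [List.foldl_cons, ih, Phi_Phi, List.prod_cons]

/-- The monomial `∏ i, X (p i)` is `X_1 ⋯ X_N` exactly when each variable occurs once. -/
theorem sum_single_eq_ones_iff {N : ℕ} (p : Fin N → Fin N) :
    (∑ i, Finsupp.single (p i) 1 = Finsupp.equivFunOnFinite.symm fun _ : Fin N => (1 : ℕ)) ↔
      Function.Bijective p := by
  constructor
  · intro h
    rw [← Finite.surjective_iff_bijective]
    intro j
    by_contra! hj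
    have := DFunLike.congr_fun h j
    simp [Finsupp.finsetSum_apply, hj] at this
  · intro hp
    ext j
    obtain ⟨i, rfl⟩ := hp.2 j
    simp [Finsupp.finsetSum_apply, Finsupp.single_apply, hp.1.eq_iff]

/-- The case of a single matrix: expanding `∏ i, ∑ j, A i j X_j` over all maps `p : i ↦ j`, only
the bijections contribute to the multilinear coefficient. -/
theorem coeff_Phi_prod_X {N : ℕ} (A : Matrix (Fin N) (Fin N) ℂ) :
    coeff (Finsupp.equivFunOnFinite.symm fun _ => 1) (Phi A (∏ j, X j)) = per A := by
  classical
  have hterm (p : Fin N → Fin N) : ∏ i, (C (A i (p i)) * X (p i) : MvPolynomial (Fin N) ℂ) =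
      monomial (∑ i, Finsupp.single (p i) 1) (∏ i, A i (p i)) := by
    rw [Finset.prod_mul_distrib, monomial_sum_index, map_prod]
    rfl
  simp only [Phi, map_prod, aeval_X, Fintype.prod_sum, hterm, coeff_sum, coeff_monomial,
    sum_single_eq_ones_iff, per]
  rw [← Finset.sum_filter]
  refine (Finset.sum_bij' (fun (σ : Equiv.Perm (Fin N)) _ => (σ : Fin N → Fin N))
    (fun p hp => Equiv.ofBijective p (Finset.mem_filter.mp hp).2) ?_ ?_ ?_ ?_ ?_).symm
  · intro σ _
    exact Finset.mem_filter.mpr ⟨Finset.mem_univ _, σ.bijective⟩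
  · simp
  · intro σ _
    ext
    rfl
  · intro p hp
    rfl
  · intro σ _
    rfl

/-- For `A = F_1 F_2 ⋯ F_L`, the permanent of `A` equals the coefficient of
`X_1 X_2 ⋯ X_N` in `(Φ_{F_L} ∘ ⋯ ∘ Φ_{F_1})(X_1 X_2 ⋯ X_N)`. -/
theorem per_eq_coeff_circuit (N L : ℕ) (F : Fin L → Matrix (Fin N) (Fin N) ℂ)
    (A : Matrix (Fin N) (Fin N) ℂ) (hA : A = (List.ofFn F).prod) :
    per A =
      coeff (Finsupp.equivFunOnFinite.symm fun _ => 1)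
        ((List.ofFn F).foldl (fun q G => Phi G q) (∏ j, X j)) := by
  rw [foldl_Phi, ← hA, coeff_Phi_prod_X]
end

section
/- Let p ∈ ℂ[X_1,…,X_N] be a polynomial in which every variable appears in every monomial with exponent at most d. Let 1 < k < N and let F ∈ M_{N×N}(ℂ) agree with the identity matrix except possibly on the entries F_{kk}, F_{k,k+1}, F_{k+1,k}, F_{k+1,k+1}; then every variable appears in every monomial of Φ_F(p) with exponent at most 2d. For a polynomial q whose variable exponents are bounded by D and a cut position j, let rank_j(q) denote the rank of the matrix with rows indexed by (n_1,…,n_j) ∈ {0,…,D}^j, columns indexed by (n_{j+1},…,n_N) ∈ {0,…,D}^{N−j}, and entries the coefficients of q. Then rank_k(Φ_F(p)) ≤ (2d+1) · min( rank_{k−1}(p), rank_{k+1}(p) ), where rank_{k−1}(p) and rank_{k+1}(p) are taken with exponents bounded by d and rank_k(Φ_F(p)) with exponents bounded by 2d. That is, applying a two-site gate on sites k, k+1 increases the Schmidt rank across the cut between k and k+1 by at most the new local dimension times the Schmidt rank at the neighboring cuts. -/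
/-!
Let `K(m, n)` be the coefficient of `X ^ n` in `Φ_F (X ^ m)`. Because `F` is the identity away from
the sites `s, s + 1`, `K(m, n)` vanishes unless `m` and `n` agree away from these sites, and then it
equals `gateCoeff F a b m_a m_b n_a n_b` with `a, b` the two sites (`coeff_Phi_monomial`). This
number is a coefficient of a form of degree `m_a + m_b` in two variables, so it is nonzero only
when `n_a + n_b = m_a + m_b ≤ 2 d`; this gives the bound on the exponents.

For the rank, sort the entries of the new matrix by the exponent `x ∈ {0, …, 2d}` of one of the two
sites. For a fixed value of `n_s = x`, the kernel `K` is a product of a function of the row indices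
and a function of the column indices with respect to the cut of `p` before `s`; hence the matrix of
`Φ_F p` is a sum of `2d + 1` terms `U x * P * V x` with `P = cutMatrix N d s p`, and its rank is at
most `(2d + 1) * rank P`. Fixing `n_{s+1}` instead gives the same bound for the cut after `s + 1`.
-/


open MvPolynomial

/-- Coefficient matricization of `q` across the cut after the first `j` variables,
with all variable exponents bounded by `D`: rows are indexed by
`(n_1,…,n_j) ∈ {0,…,D}^j`, columns by `(n_{j+1},…,n_N) ∈ {0,…,D}^{N−j}`, and the
entry is the corresponding coefficient of `q`. -/
noncomputable def cutMatrix (N D j : ℕ) (q : MvPolynomial (Fin N) ℂ) :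
    Matrix (Fin j → Fin (D + 1)) (Fin (N - j) → Fin (D + 1)) ℂ :=
  fun row col =>
    coeff (Finsupp.equivFunOnFinite.symm fun i : Fin N =>
      if h : (i : ℕ) < j then (row ⟨i, h⟩ : ℕ)
      else (col ⟨(i : ℕ) - j, by have := i.isLt; omega⟩ : ℕ)) q

/-- The exponent vector of the entry `(row, col)` of `cutMatrix`. -/
noncomputable def cutExp (N D j : ℕ) (row : Fin j → Fin (D + 1))
    (col : Fin (N - j) → Fin (D + 1)) : Fin N →₀ ℕ :=
  Finsupp.equivFunOnFinite.symm fun i : Fin N =>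
      if h : (i : ℕ) < j then (row ⟨i, h⟩ : ℕ)
      else (col ⟨(i : ℕ) - j, by have := i.isLt; omega⟩ : ℕ)

lemma cutMatrix_apply (N D j : ℕ) (q : MvPolynomial (Fin N) ℂ) (row col) :
    cutMatrix N D j q row col = coeff (cutExp N D j row col) q := rfl

lemma cutExp_le (N D j : ℕ) (row col) (i : Fin N) : cutExp N D j row col i ≤ D := by
  simp only [cutExp, Finsupp.equivFunOnFinite_symm_apply_apply]
  split_ifs <;> omega

lemma cutExp_left (N D j : ℕ) (row col col') (i : Fin N) (h : (i : ℕ) < j) :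
    cutExp N D j row col i = cutExp N D j row col' i := by
  simp [cutExp, h]

lemma cutExp_right (N D j : ℕ) (row row' col) (i : Fin N) (h : ¬ (i : ℕ) < j) :
    cutExp N D j row col i = cutExp N D j row' col i := by
  simp [cutExp, h]

lemma cutExp_injective (N D j : ℕ) (hj : j ≤ N) :
    Function.Injective fun x : (Fin j → Fin (D + 1)) × (Fin (N - j) → Fin (D + 1)) =>
      cutExp N D j x.1 x.2 := by
  rintro ⟨r, c⟩ ⟨r', c'⟩ h
  have h' : ∀ i, cutExp N D j r c i = cutExp N D j r' c' i := fun i => DFunLike.congr_fun h i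
  simp only [cutExp, Finsupp.equivFunOnFinite_symm_apply_apply] at h'
  refine Prod.ext (funext fun t => ?_) (funext fun t => ?_)
  · have := h' ⟨t, by omega⟩
    simpa [Fin.ext_iff] using this
  · have := h' ⟨j + t, by omega⟩
    simpa [Fin.ext_iff] using this

lemma cutExp_surj (N D j : ℕ) (hj : j ≤ N) (m : Fin N →₀ ℕ) (hm : ∀ i, m i ≤ D) :
    ∃ row col, cutExp N D j row col = m := by
  refine ⟨fun t => ⟨m ⟨t, by omega⟩, Nat.lt_succ_of_le (hm _)⟩,
    fun t => ⟨m ⟨j + t, by omega⟩, Nat.lt_succ_of_le (hm _)⟩, ?_⟩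
  ext i
  simp only [cutExp, Finsupp.equivFunOnFinite_symm_apply_apply]
  split_ifs with h
  · rfl
  · congr 1
    ext
    simp only
    omega

/-- The coefficient of `X_a ^ u * X_b ^ v` in `Φ_F (X_a ^ α * X_b ^ β)`. -/
noncomputable def gateCoeff {N : ℕ} (F : Matrix (Fin N) (Fin N) ℂ) (a b : Fin N)
    (α β u v : ℕ) : ℂ :=
  coeff (Finsupp.single a u + Finsupp.single b v) (Phi F (X a) ^ α * Phi F (X b) ^ β)

lemma Phi_X {N : ℕ} (F : Matrix (Fin N) (Fin N) ℂ) (i : Fin N) :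
    Phi F (X i) = ∑ j, C (F i j) * X j := by
  simp [Phi]

/-- The images of `X_a` and `X_b` are linear forms, so the gate preserves the total degree. -/
lemma gateCoeff_degree {N : ℕ} (F : Matrix (Fin N) (Fin N) ℂ) (a b : Fin N)
    (α β u v : ℕ) (h : gateCoeff F a b α β u v ≠ 0) : u + v = α + β := by
  have hL : ∀ i, (Phi F (X i)).IsHomogeneous 1 := by
    intro i
    rw [Phi_X]
    refine IsHomogeneous.sum _ _ _ fun j _ => ?_
    simpa using (isHomogeneous_C (Fin N) (F i j)).mul (isHomogeneous_X ℂ j)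
  have hW := ((hL a).pow α).mul ((hL b).pow β)
  by_contra hne
  refine h (hW.coeff_eq_zero ?_)
  simpa [Finsupp.degree_single] using hne

/-- The kernel of `Φ_F`: the other variables are fixed by the gate, and the images of `X_a`, `X_b`
involve only `X_a` and `X_b`. -/
lemma coeff_Phi_monomial {N : ℕ} (F : Matrix (Fin N) (Fin N) ℂ) (a b : Fin N) (hab : a ≠ b)
    (hF : ∀ i j : Fin N, ¬((i = a ∨ i = b) ∧ (j = a ∨ j = b)) → F i j = if i = j then 1 else 0)
    (m n : Fin N →₀ ℕ) :
    coeff n (Phi F (monomial m 1)) =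
      if ∀ i, i ≠ a → i ≠ b → m i = n i then gateCoeff F a b (m a) (m b) (n a) (n b) else 0 := by
  classical
  have hX : ∀ i, i ≠ a → i ≠ b → Phi F (X i) = X i := by
    intro i ha hb
    rw [Phi_X, Finset.sum_eq_single i]
    · rw [hF _ _ (by tauto)]; simp
    · intro j _ hj
      rw [hF _ _ (by tauto), if_neg (Ne.symm hj)]; simp
    · simp
  have hS : ∀ i, i = a ∨ i = b → Phi F (X i) ∈ supported ℂ ({a, b} : Set (Fin N)) := by
    intro i hi
    rw [Phi_X]
    refine sum_mem fun j _ => ?_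
    by_cases hj : j = a ∨ j = b
    · refine mul_mem ?_ ?_
      · exact (supported ℂ ({a, b} : Set (Fin N))).algebraMap_mem (F i j)
      · exact X_mem_supported.2 hj
    · rw [hF _ _ (by tauto), if_neg (by rintro rfl; exact hj hi)]
      simp
  have hW : Phi F (X a) ^ m a * Phi F (X b) ^ m b ∈ supported ℂ ({a, b} : Set (Fin N)) :=
    mul_mem (pow_mem (hS a (.inl rfl)) _) (pow_mem (hS b (.inr rfl)) _)
  set e : Fin N →₀ ℕ := (m.erase a).erase b with he
  have hm : m = e + Finsupp.single a (m a) + Finsupp.single b (m b) := by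
    ext i
    by_cases ha : i = a
    · subst ha; simp [he, hab]
    · by_cases hb : i = b
      · subst hb; simp [he, hab]
      · simp [he, ha, hb]
  have hea : e a = 0 := by simp [he, hab]
  have heb : e b = 0 := by simp [he]
  have hei : ∀ i, i ≠ a → i ≠ b → e i = m i := fun i ha hb => by simp [he, ha, hb]
  have hPe : Phi F (monomial e 1) = monomial e 1 := by
    rw [monomial_eq, map_mul, Finsupp.prod, map_prod]
    congr 1
    · simp [Phi]
    · refine Finset.prod_congr rfl fun i hi => ?_
      rw [map_pow, hX i]
      · rintro rfl; simp [hea] at hi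
      · rintro rfl; simp [heb] at hi
  have hPm : Phi F (monomial m 1) =
      monomial e 1 * (Phi F (X a) ^ m a * Phi F (X b) ^ m b) := by
    have : (monomial m 1 : MvPolynomial (Fin N) ℂ) =
        monomial e 1 * (X a ^ m a * X b ^ m b) := by
      rw [X_pow_eq_monomial, X_pow_eq_monomial, monomial_mul, monomial_mul, ← add_assoc, ← hm]
      simp
    rw [this, map_mul, hPe, map_mul, map_pow, map_pow]
  rw [hPm, coeff_monomial_mul', one_mul]
  by_cases hmn : ∀ i, i ≠ a → i ≠ b → m i = n i
  · have hle : e ≤ n := by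
      intro i
      by_cases ha : i = a
      · subst ha; simp [hea]
      by_cases hb : i = b
      · subst hb; simp [heb]
      rw [hei i ha hb, hmn i ha hb]
    rw [if_pos hle, if_pos hmn, gateCoeff]
    congr 1
    ext i
    by_cases ha : i = a
    · subst ha; simp [hea, hab.symm]
    by_cases hb : i = b
    · subst hb; simp [heb, hab]
    simp [hei i ha hb, hmn i ha hb, Ne.symm ha, Ne.symm hb]
  · rw [if_neg hmn]
    split_ifs with hle
    · push Not at hmn
      obtain ⟨i, ha, hb, hi⟩ := hmn
      by_contra hne
      have hlt : e i ≤ n i := hle i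
      rw [hei i ha hb] at hlt
      have : i ∈ (Phi F (X a) ^ m a * Phi F (X b) ^ m b).vars := by
        rw [mem_vars_iff_mem_support]
        refine ⟨n - e, by simpa [mem_support_iff] using hne, ?_⟩
        rw [Finsupp.mem_support_iff, Finsupp.tsub_apply, hei i ha hb]
        omega
      have := mem_supported.1 hW this
      rcases this with h | h
      · exact ha h
      · exact hb h
    · rfl

lemma coeff_Phi {N : ℕ} (F : Matrix (Fin N) (Fin N) ℂ) (p : MvPolynomial (Fin N) ℂ)
    (n : Fin N →₀ ℕ) :
    coeff n (Phi F p) = ∑ m ∈ p.support, coeff m p * coeff n (Phi F (monomial m 1)) := by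
  conv_lhs => rw [p.as_sum, map_sum, coeff_sum]
  refine Finset.sum_congr rfl fun m _ => ?_
  rw [← coeff_C_mul, ← mul_one (coeff m p), ← smul_eq_mul, ← smul_monomial, map_smul,
    smul_eq_C_mul, smul_eq_mul, mul_one]

lemma sum_support_eq (N d j : ℕ) (hj : j ≤ N) (p : MvPolynomial (Fin N) ℂ)
    (hp : ∀ m ∈ p.support, ∀ i, m i ≤ d) (f : (Fin N →₀ ℕ) → ℂ) :
    ∑ m ∈ p.support, coeff m p * f m =
      ∑ k, ∑ l, cutMatrix N d j p k l * f (cutExp N d j k l) := by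
  classical
  rw [← Fintype.sum_prod_type'
    (f := fun k l => cutMatrix N d j p k l * f (cutExp N d j k l))]
  have := Finset.sum_image (s := Finset.univ) (f := fun m => coeff m p * f m)
    ((cutExp_injective N d j hj).injOn)
  simp only [cutMatrix_apply]
  rw [← this]
  refine Finset.sum_subset ?_ ?_
  · intro m hm
    obtain ⟨r, c, h⟩ := cutExp_surj N d j hj m (hp m hm)
    exact Finset.mem_image.2 ⟨(r, c), Finset.mem_univ _, h⟩
  · intro m _ hm
    rw [notMem_support_iff.1 hm, zero_mul]

lemma rank_add_le_add {I J : Type*} [Fintype I] [Fintype J] (A B : Matrix I J ℂ) :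
    (A + B).rank ≤ A.rank + B.rank := by
  rw [Matrix.rank, Matrix.rank, Matrix.rank, Matrix.mulVecLin_add]
  exact (Submodule.finrank_mono (LinearMap.range_add_le _ _)).trans
    (Submodule.finrank_add_le_finrank_add_finrank _ _)

/-- A sum of `|X|` matrices, each factoring through `P`, has rank at most `|X| * rank P`. -/
lemma rank_le_of_kernel {X I J K L : Type*} [Fintype X] [Fintype I] [Fintype J] [Fintype K]
    [Fintype L] (P : Matrix K L ℂ) (M : Matrix I J ℂ)
    (U : X → Matrix I K ℂ) (V : X → Matrix L J ℂ)
    (h : ∀ i j, M i j = ∑ k, ∑ l, P k l * ∑ x, U x i k * V x l j) :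
    M.rank ≤ Fintype.card X * P.rank := by
  classical
  have hM : M = ∑ x, U x * P * V x := by
    ext i j
    rw [h, Matrix.sum_apply]
    simp only [Matrix.mul_apply, Finset.mul_sum, Finset.sum_mul]
    rw [Finset.sum_congr rfl fun k _ => Finset.sum_comm, Finset.sum_comm]
    refine Finset.sum_congr rfl fun x _ => ?_
    rw [Finset.sum_comm]
    refine Finset.sum_congr rfl fun k _ => Finset.sum_congr rfl fun l _ => ?_
    ring
  have key : ∀ s : Finset X, (∑ x ∈ s, U x * P * V x).rank ≤ s.card * P.rank := by
    intro s
    induction s using Finset.induction_on with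
    | empty => simp
    | insert x s hx ih =>
      rw [Finset.sum_insert hx, Finset.card_insert_of_notMem hx]
      refine (rank_add_le_add _ _).trans ?_
      have := (Matrix.rank_mul_le_left (U x * P) (V x)).trans (Matrix.rank_mul_le_right (U x) P)
      linarith
  rw [hM]
  exact key Finset.univ

/-- Expands a product of conditions into slices of fixed exponent `x`: the factor carrying
`g` then depends on `x` only, and `u` enters through the other factor alone. -/
lemma sum_slice (D u : ℕ) (hu : u ≤ D) (A B : Prop) [Decidable A] [Decidable B] (g : ℕ → ℂ) :
    ∑ x : Fin (D + 1), (if u = (x : ℕ) ∧ A then (1 : ℂ) else 0) * (if B then g x else 0) =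
      if A ∧ B then g u else 0 := by
  rw [Finset.sum_eq_single ⟨u, by omega⟩]
  · by_cases hA : A <;> by_cases hB : B <;> simp [hA, hB]
  · intro x _ hx
    rw [if_neg, zero_mul]
    rintro ⟨rfl, -⟩
    exact hx rfl
  · simp

/-- Applying a two-site gate on the (0-based) sites `s, s+1` to a polynomial whose
variable exponents are bounded by `d` yields exponents bounded by `2d`, and
increases the Schmidt rank across the cut between `s` and `s+1` to at most the new
local dimension `2d+1` times the smaller of the Schmidt ranks at the two
neighboring cuts. -/
theorem two_site_gate_rank_bound (N d s : ℕ) (hs : 1 ≤ s) (hsN : s + 1 < N)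
    (p : MvPolynomial (Fin N) ℂ) (hp : ∀ m ∈ p.support, ∀ i, m i ≤ d)
    (F : Matrix (Fin N) (Fin N) ℂ)
    (hFid : ∀ i j : Fin N,
      ¬(((i : ℕ) = s ∨ (i : ℕ) = s + 1) ∧ ((j : ℕ) = s ∨ (j : ℕ) = s + 1)) →
      F i j = if i = j then 1 else 0) :
    (∀ m ∈ (Phi F p).support, ∀ i, m i ≤ 2 * d) ∧
      (cutMatrix N (2 * d) (s + 1) (Phi F p)).rank ≤
        (2 * d + 1) * min (cutMatrix N d s p).rank (cutMatrix N d (s + 2) p).rank := by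
  classical
  obtain ⟨a, ha⟩ : ∃ a : Fin N, (a : ℕ) = s := ⟨⟨s, by omega⟩, rfl⟩
  obtain ⟨b, hb⟩ : ∃ b : Fin N, (b : ℕ) = s + 1 := ⟨⟨s + 1, by omega⟩, rfl⟩
  have hab : a ≠ b := by rintro rfl; omega
  have hF : ∀ i j : Fin N, ¬((i = a ∨ i = b) ∧ (j = a ∨ j = b)) →
      F i j = if i = j then 1 else 0 := by
    intro i j hij
    refine hFid i j ?_
    simpa only [Fin.ext_iff, ha, hb] using hij
  have hK := coeff_Phi_monomial F a b hab hF
  refine ⟨?_, ?_⟩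
  · intro n hn i
    rw [mem_support_iff, coeff_Phi] at hn
    obtain ⟨m, hm, hne⟩ := Finset.exists_ne_zero_of_sum_ne_zero hn
    have hne := right_ne_zero_of_mul hne
    rw [hK] at hne
    split_ifs at hne with hmn
    · have hdeg := gateCoeff_degree _ _ _ _ _ _ _ hne
      have h1 := hp m hm a
      have h2 := hp m hm b
      by_cases hia : i = a
      · subst hia; omega
      by_cases hib : i = b
      · subst hib; omega
      have := hmn i hia hib
      have := hp m hm i
      omega
    · exact absurd rfl hne
  · rw [mul_min_of_nonneg _ _ (Nat.zero_le _)]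
    have hcard : Fintype.card (Fin (2 * d + 1)) = 2 * d + 1 := Fintype.card_fin _
    refine le_min ?_ ?_
    -- Slices of fixed exponent `x` at site `s`. Filling the unused half of an index with `0`
    -- lets the factors be written in terms of exponent vectors.
    · have := rank_le_of_kernel (X := Fin (2 * d + 1)) (cutMatrix N d s p)
        (cutMatrix N (2 * d) (s + 1) (Phi F p))
        (fun x i k => if cutExp N (2 * d) (s + 1) i 0 a = (x : ℕ) ∧
          ∀ t : Fin N, (t : ℕ) < s → cutExp N d s k 0 t = cutExp N (2 * d) (s + 1) i 0 t
          then 1 else 0)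
        (fun x l j => if ∀ t : Fin N, s + 1 < (t : ℕ) →
            cutExp N d s 0 l t = cutExp N (2 * d) (s + 1) 0 j t
          then gateCoeff F a b (cutExp N d s 0 l a) (cutExp N d s 0 l b) x
            (cutExp N (2 * d) (s + 1) 0 j b) else 0) ?_
      · rwa [hcard] at this
      intro i j
      rw [cutMatrix_apply, coeff_Phi, sum_support_eq N d s (by omega) p hp]
      refine Finset.sum_congr rfl fun k _ => Finset.sum_congr rfl fun l _ => ?_
      congr 1
      rw [sum_slice (2 * d) _ (cutExp_le _ _ _ _ _ _) _ _
        (fun x => gateCoeff F a b (cutExp N d s 0 l a) (cutExp N d s 0 l b) x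
            (cutExp N (2 * d) (s + 1) 0 j b)), hK,
        cutExp_right N d s k 0 l a (by omega), cutExp_right N d s k 0 l b (by omega),
        cutExp_left N (2 * d) (s + 1) i j 0 a (by omega),
        cutExp_right N (2 * d) (s + 1) i 0 j b (by omega)]
      refine if_congr ⟨fun h => ⟨fun t ht => ?_, fun t ht => ?_⟩, fun h t hta htb => ?_⟩ rfl rfl
      · rw [cutExp_left N d s k 0 l t ht, cutExp_left N (2 * d) (s + 1) i 0 j t (by omega)]
        exact h t (by rintro rfl; omega) (by rintro rfl; omega)
      · rw [cutExp_right N d s 0 k l t (by omega),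
          cutExp_right N (2 * d) (s + 1) 0 i j t (by omega)]
        exact h t (by rintro rfl; omega) (by rintro rfl; omega)
      · rw [Ne, Fin.ext_iff] at hta htb
        rcases lt_or_ge (t : ℕ) s with ht | ht
        · rw [cutExp_left N d s k l 0 t ht, cutExp_left N (2 * d) (s + 1) i j 0 t (by omega)]
          exact h.1 t ht
        · rw [cutExp_right N d s k 0 l t (by omega),
            cutExp_right N (2 * d) (s + 1) i 0 j t (by omega)]
          exact h.2 t (by omega)
    -- Slices of fixed exponent `x` at site `s + 1`.
    · have := rank_le_of_kernel (X := Fin (2 * d + 1)) (cutMatrix N d (s + 2) p)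
        (cutMatrix N (2 * d) (s + 1) (Phi F p))
        (fun x i k => if ∀ t : Fin N, (t : ℕ) < s →
            cutExp N d (s + 2) k 0 t = cutExp N (2 * d) (s + 1) i 0 t
          then gateCoeff F a b (cutExp N d (s + 2) k 0 a) (cutExp N d (s + 2) k 0 b)
            (cutExp N (2 * d) (s + 1) i 0 a) x else 0)
        (fun x l j => if cutExp N (2 * d) (s + 1) 0 j b = (x : ℕ) ∧
          ∀ t : Fin N, s + 1 < (t : ℕ) →
            cutExp N d (s + 2) 0 l t = cutExp N (2 * d) (s + 1) 0 j t
          then 1 else 0) ?_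
      · rwa [hcard] at this
      intro i j
      rw [cutMatrix_apply, coeff_Phi, sum_support_eq N d (s + 2) (by omega) p hp]
      refine Finset.sum_congr rfl fun k _ => Finset.sum_congr rfl fun l _ => ?_
      congr 1
      rw [Finset.sum_congr rfl fun x _ => mul_comm _ _,
        sum_slice (2 * d) _ (cutExp_le _ _ _ _ _ _) _ _
        (fun x => gateCoeff F a b (cutExp N d (s + 2) k 0 a) (cutExp N d (s + 2) k 0 b)
            (cutExp N (2 * d) (s + 1) i 0 a) x), hK,
        cutExp_left N d (s + 2) k l 0 a (by omega), cutExp_left N d (s + 2) k l 0 b (by omega),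
        cutExp_left N (2 * d) (s + 1) i j 0 a (by omega),
        cutExp_right N (2 * d) (s + 1) i 0 j b (by omega)]
      refine if_congr ⟨fun h => ⟨fun t ht => ?_, fun t ht => ?_⟩, fun h t hta htb => ?_⟩ rfl rfl
      · rw [cutExp_right N d (s + 2) 0 k l t (by omega),
          cutExp_right N (2 * d) (s + 1) 0 i j t (by omega)]
        exact h t (by rintro rfl; omega) (by rintro rfl; omega)
      · rw [cutExp_left N d (s + 2) k 0 l t (by omega),
          cutExp_left N (2 * d) (s + 1) i 0 j t (by omega)]
        exact h t (by rintro rfl; omega) (by rintro rfl; omega)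
      · rw [Ne, Fin.ext_iff] at hta htb
        rcases lt_or_ge (t : ℕ) s with ht | ht
        · rw [cutExp_left N d (s + 2) k l 0 t (by omega),
            cutExp_left N (2 * d) (s + 1) i j 0 t (by omega)]
          exact h.2 t ht
        · rw [cutExp_right N d (s + 2) k 0 l t (by omega),
            cutExp_right N (2 * d) (s + 1) i 0 j t (by omega)]
          exact h.1 t (by omega)
end
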